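/- arXiv:2302.03179 — 15 statements merged into one kernel-verified Lean document; each statement's English description precedes it below -/
import Mathlib

section
/- The sequence b_n := a_n 2^n / √(nπ) is strictly decreasing in n: for every positive integer n, b_{n+1} < b_n. -/
open Real Filter

/-- Normalizing constant `a_n = 2^n (n!)^2 / (2n)!`. -/
noncomputable def aW (n : ℕ) : ℝ :=
  2 ^ n * (Nat.factorial n : ℝ) ^ 2 / (Nat.factorial (2 * n) : ℝ)

/-- Influence function `I_n(θ) = a_n (1 + cos θ)^n`. -/
noncomputable def influence (n : ℕ) (θ : ℝ) : ℝ := aW n * (1 + Real.cos θ) ^ n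

/-- Sensitivity function `S(θ) = -sin θ`. -/
noncomputable def sens (θ : ℝ) : ℝ := -Real.sin θ

/-- The sequence `b_n := a_n 2^n / √(nπ)` is strictly decreasing. -/
theorem stmt1 (n : ℕ) (hn : 0 < n) :
    aW (n + 1) * 2 ^ (n + 1) / Real.sqrt ((n + 1) * Real.pi) <
      aW n * 2 ^ n / Real.sqrt (n * Real.pi) := by
  have hn' : (0:ℝ) < n := by exact_mod_cast hn
  have hrec : aW (n + 1) = aW n * ((n + 1) / (2 * n + 1)) := by
    unfold aW
    have h1 : (Nat.factorial (2 * n) : ℝ) ≠ 0 := by positivity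
    rw [show 2 * (n + 1) = (2 * n + 1) + 1 by ring, Nat.factorial_succ, Nat.factorial_succ,
      Nat.factorial_succ]
    push_cast
    field_simp
    ring
  have ha : 0 < aW n := by unfold aW; positivity
  have hpi := Real.pi_pos
  have key : (2 * n + 2) * √(n * π) < (2 * n + 1) * √((n + 1) * π) := by
    apply lt_of_pow_lt_pow_left₀ 2 (by positivity)
    rw [mul_pow, mul_pow, Real.sq_sqrt (by positivity), Real.sq_sqrt (by positivity)]
    have : 0 < (n + 1) * π := by positivity
    nlinarith
  rw [hrec, div_lt_div_iff₀ (by positivity) (by positivity)]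
  have e : aW n * ((n + 1) / (2 * n + 1)) * 2 ^ (n + 1) * √(n * π)
      = (aW n * 2 ^ n / (2 * n + 1)) * ((2 * n + 2) * √(n * π)) := by
    field_simp
    ring
  have e2 : aW n * 2 ^ n * √((n + 1) * π)
      = (aW n * 2 ^ n / (2 * n + 1)) * ((2 * n + 1) * √((n + 1) * π)) := by
    field_simp
  rw [e, e2]
  exact mul_lt_mul_of_pos_left key (by positivity)
end

section
/- For every positive integer n, the supremum of |S(θ) I_n(θ)| over θ ∈ ℝ equals a_n · (√(2n+1)/(n+1)) · ((2n+1)/(n+1))^n, i.e. ‖S I_n‖_{L∞(ℝ)} = a_n ((2n+1)/(n+1))^n √(2n+1)/(n+1). -/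
open Real Filter

theorem key_aux (t : ℝ) (ht : 0 ≤ t) (m : ℕ) : t ^ m * ((m : ℝ) + 1 - m * t) ≤ 1 := by
  induction m with
  | zero => simp
  | succ k ih =>
    have h : 0 ≤ ((k : ℝ) + 1) * t ^ k * (1 - t) ^ 2 := by positivity
    push_cast
    have e : t ^ (k + 1) * ((k : ℝ) + 1 + 1 - (k + 1) * t)
        = t ^ k * ((k : ℝ) + 1 - k * t) - ((k : ℝ) + 1) * t ^ k * (1 - t) ^ 2 := by ring
    linarith

/-- `‖S I_n‖_{L^∞(ℝ)} = a_n ((2n+1)/(n+1))^n √(2n+1)/(n+1)`. -/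
theorem stmt3 (n : ℕ) (hn : 0 < n) :
    (⨆ θ : ℝ, |sens θ * influence n θ|) =
      aW n * ((2 * (n : ℝ) + 1) / ((n : ℝ) + 1)) ^ n *
        Real.sqrt (2 * (n : ℝ) + 1) / ((n : ℝ) + 1) := by
  have hN : (0 : ℝ) < (n : ℝ) + 1 := by positivity
  have hM : (0 : ℝ) < 2 * (n : ℝ) + 1 := by positivity
  have ha : 0 ≤ aW n := by unfold aW; positivity
  have hR : 0 ≤ aW n * ((2 * (n : ℝ) + 1) / ((n : ℝ) + 1)) ^ n *
        Real.sqrt (2 * (n : ℝ) + 1) / ((n : ℝ) + 1) := by positivity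
  have hsq : ∀ θ : ℝ, |sens θ * influence n θ| ^ 2
      = aW n ^ 2 * ((1 - Real.cos θ) * (1 + Real.cos θ) ^ (2 * n + 1)) := by
    intro θ
    rw [sq_abs, sens, influence]
    have h := Real.sin_sq θ
    calc (-Real.sin θ * (aW n * (1 + Real.cos θ) ^ n)) ^ 2
        = Real.sin θ ^ 2 * (aW n ^ 2 * ((1 + Real.cos θ) ^ n) ^ 2) := by ring
      _ = _ := by rw [h]; ring
  have hRsq : (aW n * ((2 * (n : ℝ) + 1) / ((n : ℝ) + 1)) ^ n *
        Real.sqrt (2 * (n : ℝ) + 1) / ((n : ℝ) + 1)) ^ 2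
      = aW n ^ 2 * ((1 / ((n : ℝ) + 1)) *
          ((2 * (n : ℝ) + 1) / ((n : ℝ) + 1)) ^ (2 * n + 1)) := by
    rw [div_pow, mul_pow, Real.sq_sqrt hM.le, mul_pow, ← pow_mul, pow_succ _ (2 * n), mul_comm n 2]
    field_simp
  have hub : ∀ θ : ℝ, |sens θ * influence n θ| ≤
      aW n * ((2 * (n : ℝ) + 1) / ((n : ℝ) + 1)) ^ n *
        Real.sqrt (2 * (n : ℝ) + 1) / ((n : ℝ) + 1) := by
    intro θ
    refine (abs_le_of_sq_le_sq' ?_ hR).2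
    rw [hsq, hRsq]
    apply mul_le_mul_of_nonneg_left _ (sq_nonneg _)
    set r := (2 * (n : ℝ) + 1) / ((n : ℝ) + 1) with hr
    have hr0 : 0 < r := by positivity
    have hx : 0 ≤ 1 + Real.cos θ := by linarith [Real.neg_one_le_cos θ]
    obtain ⟨t, ht⟩ : ∃ t, t = (1 + Real.cos θ) / r := ⟨_, rfl⟩
    have ht0 : 0 ≤ t := by rw [ht]; positivity
    have hxt : 1 + Real.cos θ = r * t := by rw [ht]; field_simp
    have hk := key_aux t ht0 (2 * n + 1)
    have h1 : 1 - Real.cos θ = 1 / ((n : ℝ) + 1) *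
        (((2 * n + 1 : ℕ) : ℝ) + 1 - ((2 * n + 1 : ℕ) : ℝ) * t) := by
      have : 1 - Real.cos θ = 2 - r * t := by linarith
      rw [this, hr]
      push_cast
      field_simp
      ring
    rw [h1, hxt, mul_pow]
    have h2 : 0 ≤ 1 / ((n : ℝ) + 1) * r ^ (2 * n + 1) := by positivity
    have h3 := mul_le_mul_of_nonneg_left hk h2
    linarith
  apply le_antisymm (ciSup_le hub)
  have hc : Real.cos (Real.arccos ((n : ℝ) / (n + 1))) = (n : ℝ) / (n + 1) := by
    apply Real.cos_arccos
    · have : (0 : ℝ) ≤ (n : ℝ) / (n + 1) := by positivity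
      linarith
    · rw [div_le_one hN]; linarith
  refine le_trans ?_ (le_ciSup ⟨_, Set.forall_mem_range.2 hub⟩ (Real.arccos ((n : ℝ) / (n + 1))))
  refine (abs_le_of_sq_le_sq' ?_ (abs_nonneg _)).2
  rw [hsq, hRsq, hc]
  have e1 : 1 - (n : ℝ) / (n + 1) = 1 / ((n : ℝ) + 1) := by field_simp; ring
  have e2 : 1 + (n : ℝ) / (n + 1) = (2 * (n : ℝ) + 1) / ((n : ℝ) + 1) := by field_simp; ring
  rw [e1, e2]
end

section
/- For every positive integer n, the supremum of |I_n'(θ)| over θ ∈ ℝ equals a_n ((2n-1)/n)^{n-1} √(2n-1), where I_n' denotes the derivative of I_n, i.e. ‖I_n'‖_{L∞(ℝ)} = a_n ((2n-1)/n)^{n-1} √(2n-1). -/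
open Real Filter

lemma bern_aux (t : ℝ) (ht : 0 ≤ t) (m : ℕ) : t ^ m * ((m + 1 : ℝ) - m * t) ≤ 1 := by
  induction m with
  | zero => simp
  | succ m ih =>
    have h : 0 ≤ ((m : ℝ) + 1) * t ^ m * (1 - t) ^ 2 := by positivity
    push_cast
    rw [pow_succ]
    nlinarith

lemma deriv_influence_aux (k : ℕ) (θ : ℝ) :
    deriv (influence (k + 1)) θ
      = -(aW (k + 1) * ((k + 1 : ℝ) * (1 + Real.cos θ) ^ k * Real.sin θ)) := by
  have h := (((Real.hasDerivAt_cos θ).const_add 1).pow (k + 1)).const_mul (aW (k + 1))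
  have h2 : HasDerivAt (influence (k + 1)) _ θ := h
  rw [h2.deriv]
  push_cast
  ring

lemma sq_id_aux (k : ℕ) (u s t : ℝ) (hs : s ^ 2 = u * (2 - u))
    (hu : u = (2 * k + 1) / (k + 1) * t) :
    ((k + 1 : ℝ) * u ^ k * s) ^ 2 =
      (((2 * k + 1 : ℝ) / (k + 1)) ^ k) ^ 2 * (2 * k + 1) *
        (t ^ (2 * k + 1) * (((2 * k + 1 : ℕ) + 1 : ℝ) - (2 * k + 1 : ℕ) * t)) := by
  have hk : (k + 1 : ℝ) ≠ 0 := by positivity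
  have h1 : (k + 1 : ℝ) ^ 2 * s ^ 2 =
      (2 * k + 1) * t * ((2 * k + 1 + 1 : ℝ) - (2 * k + 1) * t) := by
    rw [hs, hu]; field_simp; ring
  have h2 : ((k + 1 : ℝ) * u ^ k * s) ^ 2 = ((k + 1 : ℝ) ^ 2 * s ^ 2) * (u ^ k) ^ 2 := by ring
  rw [h2, h1, hu, mul_pow]
  push_cast
  ring

lemma aW_nonneg_aux (n : ℕ) : 0 ≤ aW n := by unfold aW; positivity

/-- `‖I_n'‖_{L^∞(ℝ)} = a_n ((2n-1)/n)^(n-1) √(2n-1)`. -/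
theorem stmt4 (n : ℕ) (hn : 0 < n) :
    (⨆ θ : ℝ, |deriv (influence n) θ|) =
      aW n * ((2 * (n : ℝ) - 1) / (n : ℝ)) ^ (n - 1) *
        Real.sqrt (2 * (n : ℝ) - 1) := by
  obtain ⟨k, rfl⟩ : ∃ k, n = k + 1 := ⟨n - 1, by omega⟩
  have e1 : 2 * ((k + 1 : ℕ) : ℝ) - 1 = 2 * k + 1 := by push_cast; ring
  have e2 : ((k + 1 : ℕ) : ℝ) = k + 1 := by push_cast; ring
  rw [e1, e2, Nat.add_sub_cancel, mul_assoc]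
  have hm : (0 : ℝ) < 2 * k + 1 := by positivity
  have hk : (0 : ℝ) < k + 1 := by positivity
  have hR : (0 : ℝ) ≤ ((2 * k + 1 : ℝ) / (k + 1)) ^ k * √(2 * k + 1) := by positivity
  have hR2 : (((2 * k + 1 : ℝ) / (k + 1)) ^ k * √(2 * k + 1)) ^ 2 =
      (((2 * k + 1 : ℝ) / (k + 1)) ^ k) ^ 2 * (2 * k + 1) := by
    rw [mul_pow, Real.sq_sqrt hm.le]
  have ha := aW_nonneg_aux (k + 1)
  have hs : ∀ θ : ℝ, Real.sin θ ^ 2 = (1 + Real.cos θ) * (2 - (1 + Real.cos θ)) := by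
    intro θ; rw [Real.sin_sq]; ring
  have hd : ∀ θ : ℝ, |deriv (influence (k + 1)) θ|
      = aW (k + 1) * |(k + 1 : ℝ) * (1 + Real.cos θ) ^ k * Real.sin θ| := by
    intro θ
    rw [deriv_influence_aux, abs_neg, abs_mul, abs_of_nonneg ha]
  have hub : ∀ θ : ℝ, |deriv (influence (k + 1)) θ| ≤
      aW (k + 1) * (((2 * k + 1 : ℝ) / (k + 1)) ^ k * √(2 * k + 1)) := by
    intro θ
    rw [hd]
    refine mul_le_mul_of_nonneg_left (abs_le_of_sq_le_sq ?_ hR) ha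
    have hc := Real.neg_one_le_cos θ
    have ht : 0 ≤ (1 + Real.cos θ) * (k + 1) / (2 * k + 1) :=
      div_nonneg (mul_nonneg (by linarith) hk.le) hm.le
    rw [hR2, sq_id_aux k (1 + Real.cos θ) (Real.sin θ)
      ((1 + Real.cos θ) * (k + 1) / (2 * k + 1)) (hs θ) (by field_simp)]
    exact mul_le_of_le_one_right (by positivity) (bern_aux _ ht _)
  apply le_antisymm (ciSup_le hub)
  have hcos : Real.cos (Real.arccos (k / (k + 1))) = k / (k + 1) := by
    apply Real.cos_arccos
    · have : (0 : ℝ) ≤ k / (k + 1) := by positivity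
      linarith
    · rw [div_le_one hk]; linarith
  refine le_trans (le_of_eq ?_)
    (le_ciSup (f := fun θ : ℝ => |deriv (influence (k + 1)) θ|)
      ⟨_, by rintro _ ⟨θ, rfl⟩; exact hub θ⟩ (Real.arccos (k / (k + 1))))
  rw [hd]
  congr 1
  rw [← abs_of_nonneg hR, ← sq_eq_sq_iff_abs_eq_abs, hR2,
    sq_id_aux k _ _ 1 (hs _) (by rw [hcos]; field_simp; ring)]
  push_cast
  ring
end

section
/- For every positive integer n, the normalizing constant a_n satisfies the two-sided bound √(nπ)/2^n ≤ a_n ≤ √n/2^{n-1}. -/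
open Real Filter

lemma aW_sq (n : ℕ) : (aW n * 2 ^ n) ^ 2 = Real.Wallis.W n * (2 * n + 1) := by
  rw [Real.Wallis.W_eq_factorial_ratio, aW]
  have h : (Nat.factorial (2 * n) : ℝ) ≠ 0 := by positivity
  have h2 : (2 * (n : ℝ) + 1) ≠ 0 := by positivity
  have h4 : (2 : ℝ) ^ (4 * n) = (2 ^ n) ^ 4 := by rw [mul_comm, pow_mul]
  rw [h4]
  field_simp

/-- Two-sided bound `√(nπ)/2^n ≤ a_n ≤ √n/2^(n-1)`. -/
theorem stmt5 (n : ℕ) (hn : 0 < n) :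
    Real.sqrt (n * Real.pi) / 2 ^ n ≤ aW n ∧ aW n ≤ Real.sqrt n / 2 ^ (n - 1) := by
  have ha : 0 ≤ aW n * 2 ^ n := by unfold aW; positivity
  have hn1 : (1 : ℝ) ≤ n := by exact_mod_cast hn
  have hs := aW_sq n
  constructor
  · rw [div_le_iff₀ (by positivity)]
    apply Real.sqrt_le_iff.mpr ⟨ha, ?_⟩
    rw [hs]
    have h1 : (n : ℝ) * π ≤ ((2 : ℝ) * n + 1) / (2 * n + 2) * (π / 2) * (2 * n + 1) := by
      have : ((2 : ℝ) * n + 1) / (2 * n + 2) * (π / 2) * (2 * n + 1)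
          = n * π + π / (4 * (n + 1)) := by
        field_simp
        ring
      rw [this]
      have : 0 ≤ π / (4 * ((n : ℝ) + 1)) := by positivity
      linarith
    exact h1.trans (mul_le_mul_of_nonneg_right (Real.Wallis.le_W n) (by positivity))
  · have key : aW n * 2 ^ n ≤ 2 * √n := by
      apply abs_le_of_sq_le_sq' _ (by positivity) |>.2
      rw [hs, mul_pow, Real.sq_sqrt (by positivity)]
      rcases Nat.lt_or_ge n 2 with h | h
      · obtain rfl : n = 1 := by omega
        norm_num [Real.Wallis.W]
      · have h2 : (2 : ℝ) ≤ n := by exact_mod_cast h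
        have := Real.Wallis.W_le n
        have := Real.pi_lt_d2
        nlinarith
    rw [le_div_iff₀ (by positivity)]
    obtain ⟨m, rfl⟩ : ∃ m, n = m + 1 := ⟨n - 1, by omega⟩
    rw [pow_succ] at key
    simp only [Nat.add_sub_cancel]
    linarith
end

section
/- (Emergence of incoherence) Let (θ_1,...,θ_N) be a global solution of the Winfree model of order n, and suppose two indices i, j satisfy ν_i > ν_j and the coupling strength satisfies 0 ≤ κ < (ν_i − ν_j)/(2^{n+1} a_n). Then for every t ≥ 0, |θ_i'(t) − θ_j'(t)| ≥ (ν_i − ν_j) − κ 2^{n+1} a_n > 0; in particular inf_{t ≥ 0} |θ_i'(t) − θ_j'(t)| > 0. -/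
open Real Filter

/-- A global solution of the Winfree model of order `n` with `N` oscillators,
natural frequencies `ν` and coupling strength `κ`:
`θ_i'(t) = ν_i + (κ/N) S(θ_i(t)) Σ_j I_n(θ_j(t))` for all `t ≥ 0`. -/
def IsWinfreeSol (n N : ℕ) (ν : Fin N → ℝ) (κ : ℝ) (θ : Fin N → ℝ → ℝ) : Prop :=
  ∀ i : Fin N, ∀ t : ℝ, 0 ≤ t →
    HasDerivAt (θ i)
      (ν i + (κ / N) * sens (θ i t) * ∑ j : Fin N, influence n (θ j t)) t

/-- Emergence of incoherence: if `ν_i > ν_j` and `0 ≤ κ < (ν_i − ν_j)/(2^(n+1) a_n)`,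
then the frequency gap stays uniformly positive. -/
theorem stmt7 (n N : ℕ) (hn : 0 < n) (hN : 0 < N) (ν : Fin N → ℝ) (κ : ℝ)
    (θ : Fin N → ℝ → ℝ) (hθ : IsWinfreeSol n N ν κ θ)
    (i j : Fin N) (hij : ν j < ν i)
    (hκ0 : 0 ≤ κ) (hκ : κ < (ν i - ν j) / (2 ^ (n + 1) * aW n)) :
    0 < (ν i - ν j) - κ * 2 ^ (n + 1) * aW n ∧
    ∀ t : ℝ, 0 ≤ t →
      (ν i - ν j) - κ * 2 ^ (n + 1) * aW n ≤ |deriv (θ i) t - deriv (θ j) t| := by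
  have ha : 0 < aW n := by unfold aW; positivity
  have hc : 0 < 2 ^ (n + 1) * aW n := by positivity
  rw [lt_div_iff₀ hc] at hκ
  refine ⟨by linarith, fun t ht => ?_⟩
  have hNr : (0 : ℝ) < N := by exact_mod_cast hN
  rw [(hθ i t ht).deriv, (hθ j t ht).deriv]
  set Q := ∑ k : Fin N, influence n (θ k t) with hS
  have h0 : 0 ≤ Q := Finset.sum_nonneg fun k _ => by
    have := Real.neg_one_le_cos (θ k t)
    have h1 : 0 ≤ 1 + Real.cos (θ k t) := by linarith
    unfold influence; positivity
  have h1 : Q ≤ N * (aW n * 2 ^ n) := by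
    have : Q ≤ ∑ k : Fin N, aW n * 2 ^ n := Finset.sum_le_sum fun k _ => by
      have := Real.neg_one_le_cos (θ k t)
      have := Real.cos_le_one (θ k t)
      unfold influence
      exact mul_le_mul_of_nonneg_left (pow_le_pow_left₀ (by linarith) (by linarith) n) ha.le
    simpa using this
  have hM0 : 0 ≤ κ / N * Q := by positivity
  have hM : κ / N * Q ≤ κ * (aW n * 2 ^ n) := by
    calc κ / N * Q ≤ κ / N * (N * (aW n * 2 ^ n)) := by gcongr
      _ = _ := by field_simp
  refine le_trans ?_ (le_abs_self _)
  unfold sens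
  have e1 := Real.sin_le_one (θ i t)
  have e2 := Real.neg_one_le_sin (θ j t)
  have e3 := mul_le_mul_of_nonneg_left e1 hM0
  have e4 := mul_le_mul_of_nonneg_left e2 hM0
  have e5 : κ * 2 ^ (n + 1) * aW n = 2 * (κ * (aW n * 2 ^ n)) := by ring
  rw [e5]
  linarith
end

section
/- (Existence of a positive-invariant set) Let (θ_1,...,θ_N) be a global solution of the Winfree model of order n with natural frequencies ν_1,...,ν_N and coupling strength κ. Suppose 0 < α < π, κ > (max_i |ν_i|)/(a_n sin α (1 + cos α)^n), and the initial data satisfy |θ_i(0)| < α for every i. Then for every t ≥ 0 and every index i, |θ_i(t)| < α. -/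
open Real Filter

theorem left_deriv_nonneg (f : ℝ → ℝ) (d T : ℝ) (hT : 0 < T) (hf : HasDerivAt f d T)
    (h : ∀ t, 0 ≤ t → t < T → f t ≤ f T) : 0 ≤ d := by
  have h1 : Tendsto (slope f T) (nhdsWithin T (Set.Iio T)) (nhds d) :=
    (hasDerivAt_iff_tendsto_slope.1 hf).mono_left
      (nhdsWithin_mono _ (fun x hx => ne_of_lt hx))
  refine ge_of_tendsto h1 ?_
  have h2 : ∀ᶠ t in nhdsWithin T (Set.Iio T), 0 < t :=
    mem_nhdsWithin_of_mem_nhds (lt_mem_nhds hT)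
  filter_upwards [h2, self_mem_nhdsWithin] with t ht0 htT
  rw [slope_def_field]
  have htT' : t < T := htT
  exact div_nonneg_of_nonpos (by linarith [h t ht0.le htT']) (by linarith)

/-- Existence of a positive-invariant set: if `0 < α < π`, the coupling is large,
`κ > (max_i |ν_i|)/(a_n sin α (1 + cos α)^n)`, and `|θ_i(0)| < α` for all `i`,
then `|θ_i(t)| < α` for all `t ≥ 0`. -/
theorem stmt8 (n N : ℕ) (hn : 0 < n) [NeZero N] (ν : Fin N → ℝ) (κ : ℝ)
    (θ : Fin N → ℝ → ℝ) (hθ : IsWinfreeSol n N ν κ θ)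
    (α : ℝ) (hα0 : 0 < α) (hαπ : α < Real.pi)
    (hκ : (⨆ i : Fin N, |ν i|) / (aW n * Real.sin α * (1 + Real.cos α) ^ n) < κ)
    (hinit : ∀ i : Fin N, |θ i 0| < α) :
    ∀ t : ℝ, 0 ≤ t → ∀ i : Fin N, |θ i t| < α := by
  have ha : 0 < aW n := by unfold aW; positivity
  have hs : 0 < Real.sin α := Real.sin_pos_of_pos_of_lt_pi hα0 hαπ
  have hc : 0 < 1 + Real.cos α := by
    have := Real.cos_lt_cos_of_nonneg_of_le_pi hα0.le le_rfl hαπ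
    rw [Real.cos_pi] at this
    linarith
  have hD : 0 < aW n * Real.sin α * (1 + Real.cos α) ^ n := by positivity
  have hνle : ∀ i, |ν i| ≤ ⨆ i : Fin N, |ν i| := fun i =>
    le_ciSup (f := fun i => |ν i|) (Set.finite_range _).bddAbove i
  have hν : ∀ i, |ν i| < κ * (aW n * Real.sin α * (1 + Real.cos α) ^ n) := fun i =>
    lt_of_le_of_lt (hνle i) ((div_lt_iff₀ hD).1 hκ)
  have hN : (0 : ℝ) < N := by exact_mod_cast Nat.pos_of_ne_zero (NeZero.ne N)
  have hκ0 : 0 < κ := by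
    have h0 := lt_of_le_of_lt (abs_nonneg _) (hν 0)
    exact pos_of_mul_pos_left h0 hD.le
  have hcont : ∀ i, ContinuousOn (θ i) (Set.Ici 0) := fun i t ht =>
    (hθ i t ht).continuousAt.continuousWithinAt
  by_contra hcon
  push Not at hcon
  obtain ⟨t0, ht0, i0, hi0⟩ := hcon
  let A : Set ℝ := ⋃ i : Fin N, (Set.Ici 0 ∩ (fun t => |θ i t|) ⁻¹' Set.Ici α)
  have hAc : IsClosed A := isClosed_iUnion_of_finite fun i =>
    (hcont i).abs.preimage_isClosed_of_isClosed isClosed_Ici isClosed_Ici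
  have hmem : ∀ t, t ∈ A ↔ ∃ i, 0 ≤ t ∧ α ≤ |θ i t| := by intro t; simp [A]
  have hAb : BddBelow A := ⟨0, fun t ht => by
    obtain ⟨i, h, _⟩ := (hmem t).1 ht
    exact h⟩
  have hTA : sInf A ∈ A := hAc.csInf_mem ⟨t0, (hmem t0).2 ⟨i0, ht0, hi0⟩⟩ hAb
  have hlt : ∀ t, 0 ≤ t → t < sInf A → ∀ i, |θ i t| < α := by
    intro t ht htT i
    by_contra hh
    exact absurd (csInf_le hAb ((hmem t).2 ⟨i, ht, not_lt.1 hh⟩)) (not_le.2 htT)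
  generalize sInf A = T at hTA hlt
  obtain ⟨i, hT0, hiT⟩ := (hmem T).1 hTA
  have hTpos : 0 < T := by
    rcases hT0.lt_or_eq with h | h
    · exact h
    · subst h
      exact absurd (hinit i) (not_lt.2 hiT)
  have hle : ∀ j, |θ j T| ≤ α := by
    intro j
    have h1 : Tendsto (fun t => |θ j t|) (nhdsWithin T (Set.Iio T)) (nhds |θ j T|) :=
      ((hθ j T hT0).continuousAt.abs.tendsto).mono_left nhdsWithin_le_nhds
    refine le_of_tendsto h1 ?_
    have h2 : ∀ᶠ t in nhdsWithin T (Set.Iio T), 0 < t :=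
      mem_nhdsWithin_of_mem_nhds (lt_mem_nhds hTpos)
    filter_upwards [h2, self_mem_nhdsWithin] with t h0 h1
    exact (hlt t h0.le h1 j).le
  have hinf : ∀ j, aW n * (1 + Real.cos α) ^ n ≤ influence n (θ j T) := by
    intro j
    have h1 : Real.cos α ≤ Real.cos (θ j T) := by
      rw [← Real.cos_abs (θ j T)]
      exact Real.cos_le_cos_of_nonneg_of_le_pi (abs_nonneg _) hαπ.le (hle j)
    unfold influence
    gcongr
  have hsum : N * (aW n * (1 + Real.cos α) ^ n) ≤ ∑ j : Fin N, influence n (θ j T) := by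
    have := Finset.card_nsmul_le_sum Finset.univ (fun j : Fin N => influence n (θ j T)) _
      (fun j _ => hinf j)
    simpa using this
  have hkey : κ * (aW n * Real.sin α * (1 + Real.cos α) ^ n) ≤
      (κ / N) * Real.sin α * ∑ j : Fin N, influence n (θ j T) := by
    calc κ * (aW n * Real.sin α * (1 + Real.cos α) ^ n)
        = (κ / N) * Real.sin α * (N * (aW n * (1 + Real.cos α) ^ n)) := by
          field_simp
      _ ≤ _ := by gcongr
  have hνi := abs_lt.1 (hν i)
  have hd := hθ i T hT0
  rcases (abs_eq hα0.le).1 (le_antisymm (hle i) hiT) with h | h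
  · have := left_deriv_nonneg _ _ T hTpos hd (fun t h0 h1 => by
      rw [h]; exact (abs_lt.1 (hlt t h0 h1 i)).2.le)
    rw [h, sens] at this
    linarith [hνi.2]
  · have := left_deriv_nonneg _ _ T hTpos hd.neg (fun t h0 h1 => by
      have := (abs_lt.1 (hlt t h0 h1 i)).1
      simp only [Pi.neg_apply, h]; linarith)
    rw [h, sens, Real.sin_neg] at this
    linarith [hνi.1]
end

section
/- (Complete oscillator death) Let β_n := arccos(n/(n+1)), which is the minimum point of S I_n on (0, π). Let (θ_1,...,θ_N) be a global solution of the Winfree model of order n, and assume: β_n < α < π, |θ_i(0)| < α for every i, and κ > (max_i |ν_i|)/(a_n sin α (1 + cos α)^n). Let α* ∈ (0, β_n] satisfy sin(α*) (1 + cos α*)^n = sin(α) (1 + cos α)^n. Then there exists t* ≥ 0 such that for all t ≥ t* and every index i, |θ_i(t)| < α*. -/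
open Real Filter

lemma fW_hasDeriv (n : ℕ) (x : ℝ) :
    HasDerivAt (fun x => Real.sin x * (1 + Real.cos x) ^ n)
      ((1 + Real.cos x) ^ n * ((n + 1) * Real.cos x - n)) x := by
  have h1 := (Real.hasDerivAt_sin x).mul (((Real.hasDerivAt_cos x).const_add 1).pow n)
  refine h1.congr_deriv ?_
  rcases n with _ | m
  · simp
  · have := Real.sin_sq_add_cos_sq x
    have h2 : Real.sin x * Real.sin x = (1 - Real.cos x) * (1 + Real.cos x) := by nlinarith
    simp only [Nat.add_sub_cancel, Pi.pow_apply]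
    push_cast
    linear_combination (-(1 + Real.cos x) ^ m * (m + 1)) * h2

lemma fW_ge (n : ℕ) (α αs r : ℝ) (hαπ : α < Real.pi) (hαs0 : 0 < αs)
    (hαsβ : αs ≤ Real.arccos ((n : ℝ) / ((n : ℝ) + 1)))
    (hβα : Real.arccos ((n : ℝ) / ((n : ℝ) + 1)) < α)
    (hαseq : Real.sin αs * (1 + Real.cos αs) ^ n
              = Real.sin α * (1 + Real.cos α) ^ n)
    (h1 : αs ≤ r) (h2 : r ≤ α) :
    Real.sin α * (1 + Real.cos α) ^ n ≤ Real.sin r * (1 + Real.cos r) ^ n := by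
  set β := Real.arccos ((n : ℝ) / ((n : ℝ) + 1)) with hβ
  have hn1 : (0 : ℝ) < n + 1 := by positivity
  have hcβ : Real.cos β = (n : ℝ) / ((n : ℝ) + 1) := by
    apply Real.cos_arccos
    · have : (0 : ℝ) ≤ n / (n + 1) := by positivity
      linarith
    · rw [div_le_one hn1]; linarith
  have hcβ' : (n + 1) * Real.cos β = n := by rw [hcβ]; field_simp
  have hb0 : 0 ≤ β := Real.arccos_nonneg _
  have hbpi : β ≤ π := Real.arccos_le_pi _
  have hcont : Continuous (fun x => Real.sin x * (1 + Real.cos x) ^ n) := by fun_prop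
  rcases le_total r β with h | h
  · rw [← hαseq]
    have hm : MonotoneOn (fun x => Real.sin x * (1 + Real.cos x) ^ n) (Set.Icc 0 β) := by
      apply monotoneOn_of_deriv_nonneg (convex_Icc _ _) hcont.continuousOn
      · intro x _; exact (fW_hasDeriv n x).differentiableAt.differentiableWithinAt
      · intro x hx
        rw [interior_Icc] at hx
        rw [(fW_hasDeriv n x).deriv]
        have hc : Real.cos β ≤ Real.cos x := Real.cos_le_cos_of_nonneg_of_le_pi hx.1.le hbpi hx.2.le
        have := Real.neg_one_le_cos x
        apply mul_nonneg (pow_nonneg (by linarith) _)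
        nlinarith
    exact hm ⟨hαs0.le, hαsβ⟩ ⟨by linarith, h⟩ h1
  · have hm : AntitoneOn (fun x => Real.sin x * (1 + Real.cos x) ^ n) (Set.Icc β π) := by
      apply antitoneOn_of_deriv_nonpos (convex_Icc _ _) hcont.continuousOn
      · intro x _; exact (fW_hasDeriv n x).differentiableAt.differentiableWithinAt
      · intro x hx
        rw [interior_Icc] at hx
        rw [(fW_hasDeriv n x).deriv]
        have hc : Real.cos x ≤ Real.cos β := Real.cos_le_cos_of_nonneg_of_le_pi hb0 hx.2.le hx.1.le
        have := Real.neg_one_le_cos x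
        apply mul_nonpos_of_nonneg_of_nonpos (pow_nonneg (by linarith) _)
        nlinarith
    exact hm ⟨h, by linarith⟩ ⟨hβα.le, hαπ.le⟩ h2

lemma drift (n N : ℕ) [NeZero N] (v κ M r s : ℝ) (hκ : 0 ≤ κ) (x : Fin N → ℝ) (i : Fin N)
    (hv : |v| ≤ M) (hs : s = 1 ∨ s = -1) (hr0 : 0 ≤ r) (hrπ : r ≤ π) (hi : s * x i = r)
    (hx : ∀ j, |x j| ≤ r) (ha : 0 < aW n) :
    s * (v + (κ / N) * sens (x i) * ∑ j : Fin N, influence n (x j))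
      ≤ M - κ * aW n * (Real.sin r * (1 + Real.cos r) ^ n) := by
  have hN : (0 : ℝ) < N := by exact_mod_cast Nat.pos_of_ne_zero (NeZero.ne N)
  have hsum : (N : ℝ) * (aW n * (1 + Real.cos r) ^ n) ≤ ∑ j : Fin N, influence n (x j) := by
    have : ∑ _j : Fin N, (aW n * (1 + Real.cos r) ^ n) ≤ ∑ j : Fin N, influence n (x j) := by
      apply Finset.sum_le_sum
      intro j _
      unfold influence
      have h1 : Real.cos r ≤ Real.cos (x j) := by
        rw [← Real.cos_abs (x j)]
        exact Real.cos_le_cos_of_nonneg_of_le_pi (abs_nonneg _) hrπ (hx j)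
      have := Real.neg_one_le_cos r
      have h0 : 0 ≤ 1 + Real.cos r := by linarith
      gcongr
    simpa using this
  have hsin : 0 ≤ Real.sin r := Real.sin_nonneg_of_nonneg_of_le_pi hr0 hrπ
  have hss : s * sens (x i) = - Real.sin r := by
    unfold sens
    rcases hs with rfl | rfl
    · rw [← hi]; simp
    · rw [← hi]; simp
  have hsv : s * v ≤ M := by
    rcases hs with rfl | rfl
    · linarith [le_abs_self v]
    · linarith [neg_abs_le v]
  have hk : 0 ≤ κ / N * Real.sin r := by positivity
  have h3 := mul_le_mul_of_nonneg_left hsum hk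
  have h4 : κ / N * Real.sin r * (N * (aW n * (1 + Real.cos r) ^ n))
      = κ * aW n * (Real.sin r * (1 + Real.cos r) ^ n) := by field_simp
  have h5 : s * (v + (κ / N) * sens (x i) * ∑ j : Fin N, influence n (x j))
      = s * v + κ / N * (s * sens (x i)) * ∑ j : Fin N, influence n (x j) := by ring
  rw [h5, hss]
  linarith

lemma fence (N : ℕ) (θ θ' : Fin N → ℝ → ℝ) (t1 T c ε : ℝ)
    (hd : ∀ i, ∀ t, t1 ≤ t → HasDerivAt (θ i) (θ' i t) t)
    (h0 : ∀ i, |θ i t1| < c)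
    (hb : ∀ t, t1 ≤ t → t ≤ T → ∀ s : ℝ, (s = 1 ∨ s = -1) → ∀ i,
      s * θ i t = c - ε * (t - t1) → (∀ j, |θ j t| ≤ c - ε * (t - t1)) → s * θ' i t < -ε) :
    ∀ t, t1 ≤ t → t ≤ T → ∀ i, |θ i t| < c - ε * (t - t1) := by
  by_contra! hcon
  obtain ⟨t2, h12, h2T, i2, hi2⟩ := hcon
  set A : Set ℝ := ⋃ i, {t | t ∈ Set.Icc t1 T ∧ c - ε * (t - t1) ≤ |θ i t|} with hA
  have hclosed : IsClosed A := by
    apply isClosed_iUnion_of_finite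
    intro i
    have hc : ContinuousOn (fun t => |θ i t| - (c - ε * (t - t1))) (Set.Icc t1 T) := by
      apply ContinuousOn.sub
      · exact ContinuousOn.abs (fun t ht => (hd i t ht.1).continuousAt.continuousWithinAt)
      · fun_prop
    have := hc.preimage_isClosed_of_isClosed isClosed_Icc (isClosed_Ici (a := (0:ℝ)))
    convert this using 1
    ext t; simp
  have hne : A.Nonempty := ⟨t2, Set.mem_iUnion.2 ⟨i2, ⟨h12, h2T⟩, hi2⟩⟩
  have hbdd : BddBelow A := ⟨t1, by
    intro t ht
    obtain ⟨i, hi, _⟩ := Set.mem_iUnion.1 ht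
    exact hi.1⟩
  set t0 := sInf A with ht0
  have hmem : t0 ∈ A := hclosed.csInf_mem hne hbdd
  obtain ⟨i, ⟨h10, h0T⟩, hi⟩ := Set.mem_iUnion.1 hmem
  have hlt : ∀ t, t1 ≤ t → t < t0 → ∀ j, |θ j t| < c - ε * (t - t1) := by
    intro t h1 h2 j
    by_contra! h
    have : t ∈ A := Set.mem_iUnion.2 ⟨j, ⟨h1, by linarith⟩, h⟩
    exact absurd (csInf_le hbdd this) (not_le.2 h2)
  have h10' : t1 < t0 := by
    rcases h10.lt_or_eq with h | h
    · exact h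
    · rw [← h] at hi
      have := h0 i
      simp at hi
      linarith
  have hev : ∀ᶠ t in nhdsWithin t0 (Set.Iio t0), t1 < t ∧ t < t0 := by
    filter_upwards [Ioo_mem_nhdsLT h10'] with t ht using ht
  have hle : ∀ j, |θ j t0| ≤ c - ε * (t0 - t1) := by
    intro j
    have hc1 : Tendsto (fun t => |θ j t|) (nhdsWithin t0 (Set.Iio t0)) (nhds |θ j t0|) :=
      ((hd j t0 h10).continuousAt.abs).tendsto.mono_left nhdsWithin_le_nhds
    have hc2 : Tendsto (fun t => c - ε * (t - t1)) (nhdsWithin t0 (Set.Iio t0))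
        (nhds (c - ε * (t0 - t1))) := by
      have : Continuous (fun t => c - ε * (t - t1)) := by fun_prop
      exact (this.tendsto t0).mono_left nhdsWithin_le_nhds
    apply le_of_tendsto_of_tendsto hc1 hc2
    filter_upwards [hev] with t ht
    exact (hlt t ht.1.le ht.2 j).le
  have heq : |θ i t0| = c - ε * (t0 - t1) := le_antisymm (hle i) hi
  obtain ⟨s, hs, hsi⟩ : ∃ s : ℝ, (s = 1 ∨ s = -1) ∧ s * θ i t0 = c - ε * (t0 - t1) := by
    rcases abs_cases (θ i t0) with ⟨h, _⟩ | ⟨h, _⟩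
    · exact ⟨1, Or.inl rfl, by linarith⟩
    · exact ⟨-1, Or.inr rfl, by linarith⟩
  have hD := hb t0 h10 h0T s hs i hsi hle
  have hg : HasDerivAt (fun t => s * θ i t - (c - ε * (t - t1))) (s * θ' i t0 + ε) t0 := by
    have h1 := ((hd i t0 h10).const_mul s).sub
      ((((hasDerivAt_id t0).sub_const t1).const_mul ε).const_sub c)
    refine h1.congr_deriv ?_
    ring
  have hsl := (hasDerivWithinAt_iff_tendsto_slope' (s := Set.Iio t0) (by simp)).1
    (hg.hasDerivWithinAt (s := Set.Iio t0))
  have : 0 ≤ s * θ' i t0 + ε := by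
    apply ge_of_tendsto hsl
    filter_upwards [hev] with t ht
    rw [slope_def_field]
    have h1 := hlt t ht.1.le ht.2 i
    have h2 : s * θ i t ≤ |θ i t| := by
      rcases hs with rfl | rfl
      · linarith [le_abs_self (θ i t)]
      · linarith [neg_abs_le (θ i t)]
    apply div_nonneg_of_nonpos
    · linarith
    · linarith [ht.2]
  linarith

/-- Complete oscillator death: with `β_n = arccos(n/(n+1))`, `β_n < α < π`,
`|θ_i(0)| < α`, and a large coupling, the trajectory is absorbed into
`B(α*)` in finite time, where `α* ∈ (0, β_n]` satisfies
`sin α* (1 + cos α*)^n = sin α (1 + cos α)^n`. -/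
theorem stmt9 (n N : ℕ) (hn : 0 < n) [NeZero N] (ν : Fin N → ℝ) (κ : ℝ)
    (θ : Fin N → ℝ → ℝ) (hθ : IsWinfreeSol n N ν κ θ)
    (α αs : ℝ)
    (hβα : Real.arccos ((n : ℝ) / ((n : ℝ) + 1)) < α) (hαπ : α < Real.pi)
    (hαs0 : 0 < αs) (hαsβ : αs ≤ Real.arccos ((n : ℝ) / ((n : ℝ) + 1)))
    (hαseq : Real.sin αs * (1 + Real.cos αs) ^ n
              = Real.sin α * (1 + Real.cos α) ^ n)
    (hinit : ∀ i : Fin N, |θ i 0| < α)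
    (hκ : (⨆ i : Fin N, |ν i|) / (aW n * Real.sin α * (1 + Real.cos α) ^ n) < κ) :
    ∃ tstar : ℝ, 0 ≤ tstar ∧ ∀ t : ℝ, tstar ≤ t → ∀ i : Fin N, |θ i t| < αs := by
  have ha : 0 < aW n := by unfold aW; positivity
  have hα0 : 0 < α := by linarith
  have hsin : 0 < Real.sin α := Real.sin_pos_of_pos_of_lt_pi hα0 hαπ
  have hcos : 0 < 1 + Real.cos α := by
    have := Real.cos_lt_cos_of_nonneg_of_le_pi hα0.le le_rfl hαπ
    rw [Real.cos_pi] at this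
    linarith
  have hD : 0 < aW n * Real.sin α * (1 + Real.cos α) ^ n := by positivity
  set M := ⨆ i : Fin N, |ν i| with hM
  have hνM : ∀ i, |ν i| ≤ M := fun i => le_ciSup (f := fun i => |ν i|) (Set.finite_range _).bddAbove i
  have hM0 : 0 ≤ M := Real.iSup_nonneg (fun i => abs_nonneg _)
  have hκ0 : 0 < κ := lt_of_le_of_lt (div_nonneg hM0 hD.le) hκ
  rw [div_lt_iff₀ hD] at hκ
  obtain ⟨δ, hδ⟩ : ∃ δ, δ = κ * (aW n * Real.sin α * (1 + Real.cos α) ^ n) - M := ⟨_, rfl⟩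
  have hδ0 : 0 < δ := by linarith
  have key : ∀ t, 0 ≤ t → ∀ s : ℝ, (s = 1 ∨ s = -1) → ∀ i r, αs ≤ r → r ≤ α →
      s * θ i t = r → (∀ j, |θ j t| ≤ r) →
      s * (ν i + (κ / N) * sens (θ i t) * ∑ j : Fin N, influence n (θ j t)) ≤ -δ := by
    intro t _ s hs i r h1 h2 h3 h4
    have hd := drift n N (ν i) κ M r s hκ0.le (fun j => θ j t) i (hνM i) hs (by linarith)
      (by linarith) h3 h4 ha
    have hf := fW_ge n α αs r hαπ hαs0 hαsβ hβα hαseq h1 h2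
    have := mul_le_mul_of_nonneg_left hf (mul_pos hκ0 ha).le
    refine hd.trans ?_
    rw [hδ]
    linarith
  have hlt : αs < α := by linarith
  obtain ⟨T, hT⟩ : ∃ T, T = (α - αs) / (δ / 2) := ⟨_, rfl⟩
  have hT0 : 0 ≤ T := by rw [hT]; apply div_nonneg <;> linarith
  have hTe : δ / 2 * T = α - αs := by rw [hT]; field_simp
  have p1 := fence N θ _ 0 T α (δ / 2) (fun i t ht => hθ i t ht) hinit (by
    intro t ht htT s hs i h1 h2
    have h3 : δ / 2 * t ≤ δ / 2 * T := by gcongr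
    have h4 : 0 ≤ δ / 2 * t := by positivity
    have := key t ht s hs i _ (by rw [sub_zero]; linarith) (by rw [sub_zero]; linarith) h1 h2
    linarith) T hT0 le_rfl
  refine ⟨T, hT0, fun t ht i => ?_⟩
  have p2 := fence N θ _ T t αs 0 (fun i t ht => hθ i t (hT0.trans ht)) (by
    intro i
    have := p1 i
    rw [sub_zero, hTe] at this
    linarith) (by
    intro t ht htT s hs i h1 h2
    have := key t (hT0.trans ht) s hs i _ (by linarith) (by linarith) h1 h2
    linarith) t ht le_rfl i
  linarith
end

section
/- (Death of rotation numbers) Let (θ_1,...,θ_N) be a global solution of the Winfree model of order n with 0 < α < π, |θ_i(0)| < α for every i, and κ > (max_i |ν_i|)/(a_n sin α (1 + cos α)^n). Then every oscillator has rotation number zero: for every index i, lim_{t → ∞} θ_i(t)/t = 0. -/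
open Real Filter

lemma aux_right (f : ℝ → ℝ) (d x α : ℝ) (hf : HasDerivAt f d x) (hx : f x ≤ α)
    (h : f x = α → d < 0) : ∀ᶠ y in nhdsWithin x (Set.Ioi x), f y ≤ α := by
  rcases hx.lt_or_eq with h1 | h1
  · have := hf.continuousAt.eventually (gt_mem_nhds h1)
    exact (this.filter_mono nhdsWithin_le_nhds).mono fun y hy => le_of_lt hy
  · have hs := hasDerivAt_iff_tendsto_slope.1 hf
    have h2 := hs.eventually (gt_mem_nhds (h h1))
    have h3 : ∀ᶠ y in nhdsWithin x (Set.Ioi x), slope f x y < 0 :=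
      h2.filter_mono (nhdsWithin_mono x (fun y hy => ne_of_gt hy))
    filter_upwards [h3, self_mem_nhdsWithin] with y hy hxy
    have hxy' : 0 < y - x := sub_pos.2 hxy
    rw [slope_def_field, div_lt_iff₀ hxy'] at hy
    linarith

lemma aW_pos (n : ℕ) : 0 < aW n := by
  unfold aW
  positivity

lemma influence_ge (n : ℕ) (α x : ℝ) (hαπ : α < Real.pi) (hx : |x| ≤ α) :
    aW n * (1 + Real.cos α) ^ n ≤ influence n x := by
  unfold influence
  have h1 : Real.cos α ≤ Real.cos x := by
    rw [← Real.cos_abs x]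
    exact Real.cos_le_cos_of_nonneg_of_le_pi (abs_nonneg x) hαπ.le hx
  have h2 := Real.neg_one_le_cos α
  have := aW_pos n
  gcongr
  linarith

/-- Death of rotation numbers: under the death framework every oscillator has
rotation number zero, i.e. `θ_i(t)/t → 0` as `t → ∞`. -/
theorem stmt10 (n N : ℕ) (hn : 0 < n) [NeZero N] (ν : Fin N → ℝ) (κ : ℝ)
    (θ : Fin N → ℝ → ℝ) (hθ : IsWinfreeSol n N ν κ θ)
    (α : ℝ) (hα0 : 0 < α) (hαπ : α < Real.pi)
    (hinit : ∀ i : Fin N, |θ i 0| < α)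
    (hκ : (⨆ i : Fin N, |ν i|) / (aW n * Real.sin α * (1 + Real.cos α) ^ n) < κ) :
    ∀ i : Fin N, Filter.Tendsto (fun t : ℝ => θ i t / t) Filter.atTop (nhds 0) := by
  have hsin : 0 < Real.sin α := Real.sin_pos_of_pos_of_lt_pi hα0 hαπ
  have hcos : 0 < 1 + Real.cos α := by
    have := Real.cos_lt_cos_of_nonneg_of_le_pi hα0.le le_rfl hαπ
    rw [Real.cos_pi] at this
    linarith
  have hD : 0 < aW n * Real.sin α * (1 + Real.cos α) ^ n := by
    have := aW_pos n
    positivity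
  have hsup : 0 ≤ ⨆ i : Fin N, |ν i| := Real.iSup_nonneg fun i => abs_nonneg _
  have hκ0 : 0 < κ := lt_of_le_of_lt (by positivity) hκ
  rw [div_lt_iff₀ hD] at hκ
  have hν : ∀ i, |ν i| < κ * (aW n * Real.sin α * (1 + Real.cos α) ^ n) := fun i =>
    lt_of_le_of_lt (le_ciSup (f := fun i => |ν i|) (Set.finite_range _).bddAbove i) hκ
  have hN : (0 : ℝ) < N := by exact_mod_cast Nat.pos_of_ne_zero (NeZero.ne N)
  have key : ∀ x, (∀ i, |θ i x| ≤ α) →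
      κ * (aW n * Real.sin α * (1 + Real.cos α) ^ n) ≤
        κ / N * Real.sin α * ∑ j : Fin N, influence n (θ j x) := by
    intro x hx
    have h1 : (N : ℝ) * (aW n * (1 + Real.cos α) ^ n) ≤ ∑ j : Fin N, influence n (θ j x) := by
      have := Finset.card_nsmul_le_sum Finset.univ (fun j => influence n (θ j x))
        (aW n * (1 + Real.cos α) ^ n) (fun j _ => influence_ge n α _ hαπ (hx j))
      simpa using this
    have h2 : 0 ≤ κ / N * Real.sin α := by positivity
    refine le_trans (le_of_eq ?_) (mul_le_mul_of_nonneg_left h1 h2)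
    field_simp
  have inv : ∀ T, 0 ≤ T → ∀ i, |θ i T| ≤ α := by
    intro T hT
    have hc : ∀ i, ContinuousOn (θ i) (Set.Icc 0 T) := fun i t ht =>
      (hθ i t ht.1).continuousAt.continuousWithinAt
    have hsub : Set.Icc 0 T ⊆ {t | ∀ i, |θ i t| ≤ α} := by
      apply IsClosed.Icc_subset_of_forall_mem_nhdsWithin
      · have : ({t | ∀ i, |θ i t| ≤ α} ∩ Set.Icc 0 T) =
            Set.Icc 0 T ∩ (fun t i => |θ i t|) ⁻¹' (Set.Iic (fun _ : Fin N => α)) := by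
          ext t
          simp [Pi.le_def, and_comm]
        rw [this]
        exact ContinuousOn.preimage_isClosed_of_isClosed
          (continuousOn_pi.2 fun i => (hc i).abs) isClosed_Icc isClosed_Iic
      · exact fun i => (hinit i).le
      · rintro x ⟨hx, hx0, hxT⟩
        have hk := key x hx
        change ∀ᶠ y in nhdsWithin x (Set.Ioi x), ∀ i, |θ i y| ≤ α
        rw [Filter.eventually_all]
        intro i
        have hd := hθ i x hx0
        have hνi := abs_lt.1 (hν i)
        have e1 := aux_right _ _ x α hd (abs_le.1 (hx i)).2 (by
          intro h
          rw [h]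
          unfold sens
          nlinarith [hk])
        have e2 := aux_right _ _ x α hd.neg (by
          have := (abs_le.1 (hx i)).1
          simp only [Pi.neg_apply]
          linarith) (by
          intro h
          have h' : θ i x = -α := by
            simp only [Pi.neg_apply] at h
            linarith
          rw [h']
          unfold sens
          rw [Real.sin_neg]
          nlinarith [hk])
        filter_upwards [e1, e2] with y h1 h2
        simp only [Pi.neg_apply] at h2
        exact abs_le.2 ⟨by linarith, h1⟩
    exact hsub ⟨hT, le_rfl⟩
  intro i
  have ht : Filter.Tendsto (fun t : ℝ => α / t) Filter.atTop (nhds 0) :=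
    tendsto_const_nhds.div_atTop tendsto_id
  refine squeeze_zero_norm' ?_ ht
  filter_upwards [Filter.eventually_gt_atTop 0] with t h0
  rw [Real.norm_eq_abs, abs_div, abs_of_pos h0]
  exact div_le_div_of_nonneg_right (inv t h0.le i) h0.le
end

section
/- (Partial oscillator death: invariance) Let (θ_1,...,θ_N) be a global solution of the Winfree model of order n, let p be an integer with 2 ≤ p ≤ N, and assume: 0 < α < π, |θ_i(0)| < α for every i ∈ {1,...,p}, and κ > (N/p) · (max_i |ν_i|)/(a_n sin α (1 + cos α)^n). Then for every t ≥ 0 and every i ∈ {1,...,p}, |θ_i(t)| < α. -/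
open Real Filter

lemma deriv_nonneg_of_left_max {f : ℝ → ℝ} {f' T : ℝ} (hT : 0 < T) (hf : HasDerivAt f f' T)
    (h : ∀ s, 0 ≤ s → s < T → f s ≤ f T) : 0 ≤ f' := by
  have h1 := (hasDerivWithinAt_iff_tendsto_slope' (s := Set.Iio T) (by simp)).1
    (hf.hasDerivWithinAt (s := Set.Iio T))
  refine ge_of_tendsto h1 ?_
  filter_upwards [Ioo_mem_nhdsLT hT] with s hs
  rw [slope_def_field]
  exact div_nonneg_of_nonpos (by linarith [h s hs.1.le hs.2]) (by linarith [hs.2])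

/-- Partial oscillator death (invariance): if the first `p` oscillators start in
`(-α, α)` and `κ > (N/p)·(max_i |ν_i|)/(a_n sin α (1 + cos α)^n)`, then the first
`p` oscillators stay in `(-α, α)` for all `t ≥ 0`. -/
theorem stmt11 (n N p : ℕ) (hn : 0 < n) [NeZero N] (hp2 : 2 ≤ p) (hpN : p ≤ N)
    (ν : Fin N → ℝ) (κ : ℝ) (θ : Fin N → ℝ → ℝ) (hθ : IsWinfreeSol n N ν κ θ)
    (α : ℝ) (hα0 : 0 < α) (hαπ : α < Real.pi)
    (hinit : ∀ i : Fin N, (i : ℕ) < p → |θ i 0| < α)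
    (hκ : ((N : ℝ) / p) * (⨆ i : Fin N, |ν i|) /
            (aW n * Real.sin α * (1 + Real.cos α) ^ n) < κ) :
    ∀ t : ℝ, 0 ≤ t → ∀ i : Fin N, (i : ℕ) < p → |θ i t| < α := by
  have hs : 0 < Real.sin α := Real.sin_pos_of_pos_of_lt_pi hα0 hαπ
  have hc : 0 < 1 + Real.cos α := by
    have := Real.cos_lt_cos_of_nonneg_of_le_pi hα0.le le_rfl hαπ
    rw [Real.cos_pi] at this
    linarith
  have ha := aW_pos n
  have hN : (0 : ℝ) < N := by exact_mod_cast Nat.pos_of_ne_zero (NeZero.ne N)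
  have hp : (0 : ℝ) < p := by exact_mod_cast (by omega : 0 < p)
  have hD : 0 < aW n * Real.sin α * (1 + Real.cos α) ^ n := by positivity
  have hM : ∀ i, |ν i| ≤ ⨆ i : Fin N, |ν i| := fun i =>
    le_ciSup (f := fun i => |ν i|) (Set.finite_range _).bddAbove i
  set M := ⨆ i : Fin N, |ν i| with hMdef
  have hM0 : 0 ≤ M := (abs_nonneg _).trans (hM ⟨0, Nat.pos_of_ne_zero (NeZero.ne N)⟩)
  have hκ0 : 0 < κ := lt_of_le_of_lt (by positivity) hκ
  have hkey : M < κ / N * (Real.sin α * (p * influence n α)) := by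
    rw [div_lt_iff₀ hD, div_mul_eq_mul_div, div_lt_iff₀ hp] at hκ
    unfold influence
    rw [div_mul_eq_mul_div, lt_div_iff₀ hN]
    linarith
  have hcont : ∀ i, ∀ t, 0 ≤ t → ContinuousAt (θ i) t := fun i t ht => (hθ i t ht).continuousAt
  by_contra hcon
  push Not at hcon
  let S : Set ℝ := ⋃ i ∈ {i : Fin N | (i : ℕ) < p}, (Set.Ici 0 ∩ (fun t => |θ i t|) ⁻¹' Set.Ici α)
  have hSmem : ∀ t, t ∈ S ↔ ∃ i : Fin N, (i : ℕ) < p ∧ 0 ≤ t ∧ α ≤ |θ i t| := by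
    intro t; simp [S]; tauto
  have hSc : IsClosed S := by
    refine Set.Finite.isClosed_biUnion (Set.toFinite _) fun i _ => ?_
    refine ContinuousOn.preimage_isClosed_of_isClosed ?_ isClosed_Ici isClosed_Ici
    exact fun t ht => (hcont i t ht).abs.continuousWithinAt
  have hSne : S.Nonempty := by
    obtain ⟨t, ht, i, hi, h⟩ := hcon
    exact ⟨t, (hSmem t).2 ⟨i, hi, ht, h⟩⟩
  have hSb : BddBelow S := ⟨0, fun t ht => by
    obtain ⟨i, _, h, _⟩ := (hSmem t).1 ht
    exact h⟩
  have hTS := hSc.csInf_mem hSne hSb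
  set T := sInf S with hTdef
  obtain ⟨i, hi, hT0, hiT⟩ := (hSmem T).1 hTS
  have hTpos : 0 < T := by
    rcases hT0.eq_or_lt with h | h
    · rw [← h] at hiT
      exact absurd (hinit i hi) (not_lt.2 hiT)
    · exact h
  have hbef : ∀ s, 0 ≤ s → s < T → ∀ j : Fin N, (j : ℕ) < p → |θ j s| < α := by
    intro s hs0 hsT j hj
    by_contra h
    exact absurd (csInf_le hSb ((hSmem s).2 ⟨j, hj, hs0, not_lt.1 h⟩)) (not_le.2 hsT)
  have hat : ∀ j : Fin N, (j : ℕ) < p → |θ j T| ≤ α := by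
    intro j hj
    have h1 : Tendsto (fun t => |θ j t|) (nhdsWithin T (Set.Iio T)) (nhds |θ j T|) :=
      (hcont j T hT0).abs.tendsto.mono_left nhdsWithin_le_nhds
    refine le_of_tendsto h1 ?_
    filter_upwards [Ioo_mem_nhdsLT hTpos] with s hs
    exact (hbef s hs.1.le hs.2 j hj).le
  have hnn : ∀ x, 0 ≤ influence n x := fun x =>
    mul_nonneg ha.le (pow_nonneg (by linarith [Real.neg_one_le_cos x]) n)
  have hsum : p * influence n α ≤ ∑ j : Fin N, influence n (θ j T) := by
    have hcard : (Finset.univ.filter fun j : Fin N => (j : ℕ) < p).card = p := by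
      rw [Fin.card_filter_val_lt]; omega
    calc p * influence n α
        = ∑ j ∈ Finset.univ.filter (fun j : Fin N => (j : ℕ) < p), influence n α := by
          rw [Finset.sum_const, hcard, nsmul_eq_mul]
      _ ≤ ∑ j ∈ Finset.univ.filter (fun j : Fin N => (j : ℕ) < p), influence n (θ j T) := by
          refine Finset.sum_le_sum fun j hj => ?_
          have hj' := hat j (Finset.mem_filter.1 hj).2
          have : Real.cos α ≤ Real.cos (θ j T) := by
            rw [← Real.cos_abs (θ j T)]
            exact Real.cos_le_cos_of_nonneg_of_le_pi (abs_nonneg _) hαπ.le hj'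
          unfold influence
          gcongr
      _ ≤ _ := Finset.sum_le_sum_of_subset_of_nonneg (Finset.filter_subset _ _)
          fun j _ _ => hnn _
  have hbig : M < κ / N * (Real.sin α * ∑ j : Fin N, influence n (θ j T)) :=
    lt_of_lt_of_le hkey (by gcongr)
  have hder := hθ i T hT0
  have hνi := abs_le.1 (hM i)
  have heq : |θ i T| = α := le_antisymm (hat i hi) hiT
  rcases (abs_eq hα0.le).1 heq with h | h
  · have := deriv_nonneg_of_left_max hTpos hder fun s h0 h1 => by
      rw [h]; exact (abs_lt.1 (hbef s h0 h1 i hi)).2.le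
    rw [h] at this
    unfold sens at this
    nlinarith
  · have := deriv_nonneg_of_left_max hTpos hder.neg fun s h0 h1 => by
      have := (abs_lt.1 (hbef s h0 h1 i hi)).1.le
      simp only [Pi.neg_apply, h]; linarith
    rw [h] at this
    unfold sens at this
    rw [Real.sin_neg] at this
    nlinarith
end

section
/- (Partial oscillator death: absorption of further oscillators) Let (θ_1,...,θ_N) be a global solution of the Winfree model of order n, let p be an integer with 2 ≤ p ≤ N, and assume: 0 < α < π, |θ_i(0)| < α for every i ∈ {1,...,p}, and κ > (N/p) · (max_i |ν_i|)/(a_n sin α (1 + cos α)^n). If for some index i ∈ {p+1,...,N} there exists t* ≥ 0 with |θ_i(t*)| < α, then |θ_i(t)| < α for all t ≥ t*. -/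
open Real Filter

theorem aux_left {f : ℝ → ℝ} {d s t0 : ℝ} (h : HasDerivAt f d s) (hs : t0 < s)
    (hle : ∀ u, t0 ≤ u → u < s → f u ≤ f s) : 0 ≤ d := by
  have h1 := (hasDerivAt_iff_tendsto_slope.1 h).mono_left
    (nhdsWithin_mono s (fun x (hx : x < s) => ne_of_lt hx) : nhdsWithin s (Set.Iio s) ≤ _)
  refine ge_of_tendsto h1 ?_
  filter_upwards [Ioo_mem_nhdsLT hs] with u hu
  rw [slope_def_field]
  exact div_nonneg_of_nonpos (by linarith [hle u hu.1.le hu.2]) (by linarith [hu.2])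

theorem aux_barrier {ι : Type*} (P : Finset ι) (f f' : ι → ℝ → ℝ) (α t0 : ℝ)
    (hd : ∀ j ∈ P, ∀ t, t0 ≤ t → HasDerivAt (f j) (f' j t) t)
    (h0 : ∀ j ∈ P, |f j t0| < α)
    (hup : ∀ t, t0 ≤ t → (∀ j ∈ P, |f j t| ≤ α) → ∀ j ∈ P, f j t = α → f' j t < 0)
    (hdn : ∀ t, t0 ≤ t → (∀ j ∈ P, |f j t| ≤ α) → ∀ j ∈ P, f j t = -α → 0 < f' j t) :
    ∀ t, t0 ≤ t → ∀ j ∈ P, |f j t| < α := by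
  intro t ht j hj
  by_contra hcon
  push Not at hcon
  have hclosed : IsClosed (⋃ k ∈ P, Set.Icc t0 t ∩ (fun u => |f k u|) ⁻¹' Set.Ici α) := by
    refine P.finite_toSet.isClosed_biUnion fun k hk => ?_
    refine ContinuousOn.preimage_isClosed_of_isClosed ?_ isClosed_Icc isClosed_Ici
    intro u hu
    exact ((hd k hk u hu.1).continuousAt.abs).continuousWithinAt
  have hcomp : IsCompact (⋃ k ∈ P, Set.Icc t0 t ∩ (fun u => |f k u|) ⁻¹' Set.Ici α) := by
    refine isCompact_Icc.of_isClosed_subset hclosed (s := Set.Icc t0 t) ?_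
    exact Set.iUnion₂_subset fun k _ => Set.inter_subset_left
  obtain ⟨s, hsB, hmin⟩ := hcomp.exists_isLeast
    ⟨t, Set.mem_biUnion hj ⟨⟨ht, le_rfl⟩, hcon⟩⟩
  obtain ⟨k, hk, ⟨hs0, hst⟩, hks⟩ := Set.mem_iUnion₂.1 hsB
  have hks' : α ≤ |f k s| := hks
  have hlt : t0 < s := by
    rcases hs0.lt_or_eq with h | h
    · exact h
    · subst h; linarith [h0 k hk]
  have hbefore : ∀ m ∈ P, ∀ u, t0 ≤ u → u < s → |f m u| < α := by
    intro m hm u hu hus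
    by_contra hc
    push Not at hc
    have := hmin (Set.mem_biUnion hm ⟨⟨hu, by linarith⟩, hc⟩)
    linarith
  have hat : ∀ m ∈ P, |f m s| ≤ α := by
    intro m hm
    have hc : Tendsto (fun u => |f m u|) (nhdsWithin s (Set.Iio s)) (nhds |f m s|) :=
      ((hd m hm s hs0).continuousAt.abs).tendsto.mono_left nhdsWithin_le_nhds
    refine le_of_tendsto hc ?_
    filter_upwards [Ioo_mem_nhdsLT hlt] with u hu
    exact (hbefore m hm u hu.1.le hu.2).le
  have heq : |f k s| = α := le_antisymm (hat k hk) hks'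
  rcases abs_choice (f k s) with h | h
  · have h1 : f k s = α := by rw [← h, heq]
    have h2 := aux_left (hd k hk s hs0) hlt (fun u hu hus => by
      rw [h1]; exact (abs_lt.1 (hbefore k hk u hu hus)).2.le)
    linarith [hup s hs0 hat k hk h1]
  · have h1 : f k s = -α := by rw [← heq, h]; ring
    have h2 := aux_left (hd k hk s hs0).neg hlt (fun u hu hus => by
      have := (abs_lt.1 (hbefore k hk u hu hus)).1
      simp only [Pi.neg_apply]
      linarith)
    linarith [hdn s hs0 hat k hk h1]

/-- Partial oscillator death (absorption of further oscillators): under the partial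
death framework, any other oscillator that enters `(-α, α)` at some time `t* ≥ 0`
stays in `(-α, α)` for all later times. -/
theorem stmt12 (n N p : ℕ) (hn : 0 < n) [NeZero N] (hp2 : 2 ≤ p) (hpN : p ≤ N)
    (ν : Fin N → ℝ) (κ : ℝ) (θ : Fin N → ℝ → ℝ) (hθ : IsWinfreeSol n N ν κ θ)
    (α : ℝ) (hα0 : 0 < α) (hαπ : α < Real.pi)
    (hinit : ∀ i : Fin N, (i : ℕ) < p → |θ i 0| < α)
    (hκ : ((N : ℝ) / p) * (⨆ i : Fin N, |ν i|) /
            (aW n * Real.sin α * (1 + Real.cos α) ^ n) < κ)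
    (i : Fin N) (hi : p ≤ (i : ℕ))
    (tstar : ℝ) (htstar : 0 ≤ tstar) (hstart : |θ i tstar| < α) :
    ∀ t : ℝ, tstar ≤ t → |θ i t| < α := by
  have hN : (0:ℝ) < N := by exact_mod_cast Nat.pos_of_ne_zero (NeZero.ne N)
  have hp : (0:ℝ) < p := by exact_mod_cast (by omega : 0 < p)
  have ha : 0 < aW n := by unfold aW; positivity
  have hsin : 0 < Real.sin α := Real.sin_pos_of_pos_of_lt_pi hα0 hαπ
  have hcos : 0 < 1 + Real.cos α := by
    have := Real.cos_lt_cos_of_nonneg_of_le_pi hα0.le le_rfl hαπ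
    rw [Real.cos_pi] at this; linarith
  have hD : 0 < aW n * Real.sin α * (1 + Real.cos α) ^ n := by positivity
  have hbdd : ∀ j, |ν j| ≤ ⨆ i : Fin N, |ν i| := fun j =>
    le_ciSup (f := fun i => |ν i|) (Set.finite_range _).bddAbove j
  have hV : 0 ≤ ⨆ i : Fin N, |ν i| := (abs_nonneg _).trans (hbdd i)
  have hκ0 : 0 < κ := lt_of_le_of_lt (by positivity) hκ
  have hinf : ∀ x, 0 ≤ influence n x := fun x => by
    unfold influence
    have : 0 ≤ 1 + Real.cos x := by linarith [Real.neg_one_le_cos x]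
    positivity
  have hinfα : ∀ x, |x| ≤ α → aW n * (1 + Real.cos α) ^ n ≤ influence n x := fun x hx => by
    unfold influence
    have : Real.cos α ≤ Real.cos x := by
      rw [← Real.cos_abs x]
      exact Real.cos_le_cos_of_nonneg_of_le_pi (abs_nonneg x) hαπ.le hx
    gcongr
  let P : Finset (Fin N) := Finset.univ.filter (fun j => (j : ℕ) < p)
  have hPcard : P.card = p := by
    simp only [P, Fin.card_filter_val_lt]
    omega
  have hsum : ∀ t, (∀ j ∈ P, |θ j t| ≤ α) →
      p * (aW n * (1 + Real.cos α) ^ n) ≤ ∑ j : Fin N, influence n (θ j t) := by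
    intro t h
    calc (p:ℝ) * (aW n * (1 + Real.cos α) ^ n) = P.card • (aW n * (1 + Real.cos α) ^ n) := by
          rw [hPcard, nsmul_eq_mul]
      _ ≤ ∑ j ∈ P, influence n (θ j t) :=
          Finset.card_nsmul_le_sum _ _ _ (fun j hj => hinfα _ (h j hj))
      _ ≤ _ := Finset.sum_le_sum_of_subset_of_nonneg (Finset.subset_univ _)
          (fun j _ _ => hinf _)
  have hkey : ∀ t, (∀ j ∈ P, |θ j t| ≤ α) → ∀ j,
      |ν j| < (κ / N) * Real.sin α * ∑ j : Fin N, influence n (θ j t) := by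
    intro t h j
    rw [div_lt_iff₀ hD] at hκ
    have h1 : (⨆ i : Fin N, |ν i|) <
        (κ / N) * Real.sin α * (p * (aW n * (1 + Real.cos α) ^ n)) := by
      have h2 := mul_lt_mul_of_pos_left hκ (div_pos hp hN)
      calc (⨆ i : Fin N, |ν i|) = (p / N : ℝ) * ((N : ℝ) / p * (⨆ i : Fin N, |ν i|)) := by
            field_simp
        _ < _ := h2
        _ = _ := by ring
    refine (hbdd j).trans_lt (h1.trans_le ?_)
    have := hsum t h
    gcongr
  have hup : ∀ t, (∀ j ∈ P, |θ j t| ≤ α) → ∀ j, θ j t = α →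
      ν j + (κ / N) * sens (θ j t) * ∑ j : Fin N, influence n (θ j t) < 0 := by
    intro t h j hj
    have := (abs_lt.1 (hkey t h j)).2
    rw [hj]; unfold sens; linarith
  have hdn : ∀ t, (∀ j ∈ P, |θ j t| ≤ α) → ∀ j, θ j t = -α →
      0 < ν j + (κ / N) * sens (θ j t) * ∑ j : Fin N, influence n (θ j t) := by
    intro t h j hj
    have := (abs_lt.1 (hkey t h j)).1
    rw [hj]; unfold sens; rw [Real.sin_neg]; linarith
  have hP := aux_barrier P θ _ α 0 (fun j _ t ht => hθ j t ht)
    (fun j hj => hinit j (by simpa [P] using hj))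
    (fun t _ h j _ => hup t h j) (fun t _ h j _ => hdn t h j)
  have hPle : ∀ t, tstar ≤ t → ∀ j ∈ P, |θ j t| ≤ α :=
    fun t ht j hj => (hP t (htstar.trans ht) j hj).le
  intro t ht
  exact aux_barrier {i} θ _ α tstar (fun j _ t ht => hθ j t (htstar.trans ht))
    (fun j hj => by rw [Finset.mem_singleton.1 hj]; exact hstart)
    (fun t ht _ j _ => hup t (hPle t ht) j) (fun t ht _ j _ => hdn t (hPle t ht) j)
    t ht i (Finset.mem_singleton_self i)
end

section
/- (Strict increase of the mid-phase) Let (θ_1,...,θ_N) be a global solution of the Winfree model of order n with identical natural frequencies ν_i = ν > 0 for all i and coupling strength 0 < κ < ν/(2^n a_n). Suppose M and m are indices such that θ_M(t) = max_i θ_i(t) and θ_m(t) = min_i θ_i(t) for all t ≥ 0, and set A(t) := (θ_M(t) + θ_m(t))/2. Then for every t ≥ 0, A'(t) ≥ ν − κ 2^n a_n > 0; in particular A is strictly increasing on [0, ∞). -/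
open Real Filter

/-- Strict increase of the mid-phase `A(t) = (θ_M(t) + θ_m(t))/2` for an identical
ensemble with `0 < κ < ν/(2^n a_n)`. -/
theorem stmt13 (n N : ℕ) (hn : 0 < n) (hN : 0 < N) (ν : ℝ) (hν : 0 < ν) (κ : ℝ)
    (hκ0 : 0 < κ) (hκ : κ < ν / (2 ^ n * aW n))
    (θ : Fin N → ℝ → ℝ) (hθ : IsWinfreeSol n N (fun _ => ν) κ θ)
    (M m : Fin N)
    (hM : ∀ t : ℝ, 0 ≤ t → ∀ i : Fin N, θ i t ≤ θ M t)
    (hm : ∀ t : ℝ, 0 ≤ t → ∀ i : Fin N, θ m t ≤ θ i t) :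
    (0 < ν - κ * 2 ^ n * aW n) ∧
    (∀ t : ℝ, 0 ≤ t →
      ν - κ * 2 ^ n * aW n ≤ deriv (fun s => (θ M s + θ m s) / 2) t) ∧
    StrictMonoOn (fun s => (θ M s + θ m s) / 2) (Set.Ici (0 : ℝ)) := by
  have ha : 0 < aW n := by
    unfold aW
    positivity
  have hN' : (0 : ℝ) < N := by exact_mod_cast hN
  have hpos : 0 < ν - κ * 2 ^ n * aW n := by
    rw [lt_div_iff₀ (by positivity)] at hκ
    nlinarith
  have hbound : ∀ i : Fin N, ∀ t : ℝ, ν - κ * 2 ^ n * aW n ≤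
      ν + (κ / N) * sens (θ i t) * ∑ j : Fin N, influence n (θ j t) := by
    intro i t
    have h0 : 0 ≤ ∑ j : Fin N, influence n (θ j t) := by
      apply Finset.sum_nonneg
      intro j _
      unfold influence
      have : 0 ≤ 1 + Real.cos (θ j t) := by linarith [Real.neg_one_le_cos (θ j t)]
      positivity
    have h1 : ∑ j : Fin N, influence n (θ j t) ≤ N * (2 ^ n * aW n) := by
      have : ∑ j : Fin N, influence n (θ j t) ≤ ∑ _j : Fin N, 2 ^ n * aW n := by
        apply Finset.sum_le_sum
        intro j _
        unfold influence
        rw [mul_comm]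
        apply mul_le_mul_of_nonneg_right _ ha.le
        apply pow_le_pow_left₀
        · linarith [Real.neg_one_le_cos (θ j t)]
        · linarith [Real.cos_le_one (θ j t)]
      simpa using this
    have h2 : -1 ≤ sens (θ i t) := by
      unfold sens
      linarith [Real.sin_le_one (θ i t)]
    have h3 : -(N * (2 ^ n * aW n)) ≤ sens (θ i t) * ∑ j : Fin N, influence n (θ j t) := by
      nlinarith
    have h4 := mul_le_mul_of_nonneg_left h3 (div_pos hκ0 hN').le
    have h5 : κ / N * -(N * (2 ^ n * aW n)) = -(κ * 2 ^ n * aW n) := by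
      field_simp
    rw [h5] at h4
    linarith
  have hd : ∀ t : ℝ, 0 ≤ t → ∃ d, HasDerivAt (fun s => (θ M s + θ m s) / 2) d t ∧
      ν - κ * 2 ^ n * aW n ≤ d := by
    intro t ht
    refine ⟨_, ((hθ M t ht).add (hθ m t ht)).div_const 2, ?_⟩
    have := hbound M t
    have := hbound m t
    linarith
  have hD : ∀ t : ℝ, 0 ≤ t →
      ν - κ * 2 ^ n * aW n ≤ deriv (fun s => (θ M s + θ m s) / 2) t := by
    intro t ht
    obtain ⟨d, h, hle⟩ := hd t ht
    rw [h.deriv]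
    exact hle
  refine ⟨hpos, hD, ?_⟩
  apply strictMonoOn_of_deriv_pos (convex_Ici 0)
  · intro t ht
    obtain ⟨d, h, -⟩ := hd t ht
    exact h.continuousAt.continuousWithinAt
  · intro t ht
    exact lt_of_lt_of_le hpos (hD t (interior_subset ht))
end

section
/- (Monotonicity of the phase radius) Let (θ_1,...,θ_N) be a global solution of the Winfree model of order n with identical natural frequencies ν_i = ν > 0 for all i and coupling strength 0 < κ < ν/(2^n a_n). Suppose M and m are indices such that θ_M(t) = max_i θ_i(t) and θ_m(t) = min_i θ_i(t) for all t ≥ 0, and set A(t) := (θ_M(t) + θ_m(t))/2, R(t) := (θ_M(t) − θ_m(t))/2, and I_{n,c}(t) := (1/N) Σ_{j=1}^N I_n(θ_j(t)). Then R'(t) = −κ I_{n,c}(t) cos A(t) sin R(t) for all t ≥ 0; moreover, if at some time t one has 0 < R(t) ≤ π/2, then R'(t) < 0 whenever cos A(t) > 0, and R'(t) > 0 whenever cos A(t) < 0. -/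
open Real Filter

/-- Monotonicity of the phase radius `R(t) = (θ_M(t) − θ_m(t))/2`:
`R'(t) = −κ I_{n,c}(t) cos A(t) sin R(t)`, and `R` strictly decreases
(resp. increases) when `0 < R(t) ≤ π/2` and `cos A(t) > 0` (resp. `< 0`). -/
theorem stmt14 (n N : ℕ) (hn : 0 < n) (hN : 0 < N) (ν : ℝ) (hν : 0 < ν) (κ : ℝ)
    (hκ0 : 0 < κ) (hκ : κ < ν / (2 ^ n * aW n))
    (θ : Fin N → ℝ → ℝ) (hθ : IsWinfreeSol n N (fun _ => ν) κ θ)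
    (M m : Fin N)
    (hM : ∀ t : ℝ, 0 ≤ t → ∀ i : Fin N, θ i t ≤ θ M t)
    (hm : ∀ t : ℝ, 0 ≤ t → ∀ i : Fin N, θ m t ≤ θ i t) :
    ∀ t : ℝ, 0 ≤ t →
      HasDerivAt (fun s => (θ M s - θ m s) / 2)
        (-κ * ((1 / (N : ℝ)) * ∑ j : Fin N, influence n (θ j t)) *
          Real.cos ((θ M t + θ m t) / 2) * Real.sin ((θ M t - θ m t) / 2)) t ∧
      (0 < (θ M t - θ m t) / 2 → (θ M t - θ m t) / 2 ≤ Real.pi / 2 →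
        ((0 < Real.cos ((θ M t + θ m t) / 2) →
            deriv (fun s => (θ M s - θ m s) / 2) t < 0) ∧
         (Real.cos ((θ M t + θ m t) / 2) < 0 →
            0 < deriv (fun s => (θ M s - θ m s) / 2) t))) := by
  have ha : 0 < aW n := by unfold aW; positivity
  have hinf : ∀ x, 0 ≤ influence n x := fun x => by
    unfold influence
    have : 0 ≤ 1 + Real.cos x := by linarith [Real.neg_one_le_cos x]
    positivity
  have hNR : (0 : ℝ) < N := by exact_mod_cast hN
  intro t ht
  have hD : HasDerivAt (fun s => (θ M s - θ m s) / 2)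
        (-κ * ((1 / (N : ℝ)) * ∑ j : Fin N, influence n (θ j t)) *
          Real.cos ((θ M t + θ m t) / 2) * Real.sin ((θ M t - θ m t) / 2)) t := by
    have h := ((hθ M t ht).sub (hθ m t ht)).div_const 2
    have hs := Real.sin_sub_sin (θ M t) (θ m t)
    refine HasDerivAt.congr_deriv h ?_
    unfold sens
    have : Real.sin (θ M t) = Real.sin (θ m t) +
      2 * Real.sin ((θ M t - θ m t) / 2) * Real.cos ((θ M t + θ m t) / 2) := by linarith
    rw [this]
    ring
  refine ⟨hD, fun h0 h1 => ?_⟩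
  have hsin : 0 < Real.sin ((θ M t - θ m t) / 2) :=
    Real.sin_pos_of_pos_of_lt_pi h0 (by linarith [Real.pi_pos])
  have hS : 0 < ∑ j : Fin N, influence n (θ j t) := by
    refine lt_of_le_of_ne (Finset.sum_nonneg fun j _ => hinf _) fun h => ?_
    have hz := (Finset.sum_eq_zero_iff_of_nonneg (fun j _ => hinf (θ j t))).1 h.symm
    have hc : ∀ j, Real.cos (θ j t) = -1 := fun j => by
      have h2 := hz j (Finset.mem_univ j)
      unfold influence at h2
      have h3 := (mul_eq_zero.1 h2).resolve_left ha.ne'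
      have h4 := pow_eq_zero_iff hn.ne' |>.1 h3
      linarith
    have hsM : Real.sin (θ M t) = 0 := by
      have := Real.sin_sq_add_cos_sq (θ M t)
      rw [hc M] at this
      nlinarith
    have h5 := Real.cos_sub (θ M t) (θ m t)
    rw [hc, hc, hsM] at h5
    have h6 := Real.cos_sq' ((θ M t - θ m t) / 2)
    have h7 := Real.cos_two_mul ((θ M t - θ m t) / 2)
    rw [mul_div_cancel₀ _ (two_ne_zero)] at h7
    nlinarith [pow_pos hsin 2]
  rw [hD.deriv]
  have hP : 0 < κ * ((1 / (N : ℝ)) * ∑ j : Fin N, influence n (θ j t)) *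
      Real.sin ((θ M t - θ m t) / 2) := by positivity
  constructor
  · intro hc
    nlinarith [mul_pos hP hc]
  · intro hc
    nlinarith [mul_neg_of_pos_of_neg hP hc]
end

section
/- For every integer n ≥ 2, the integral ∫_{−π/2}^{π/2} cos A · cos^{2n}(A/2) dA is at least (n/(n+1)) · (π + 2)/(2^n a_n). -/
open Real Filter

noncomputable def KK (n : ℕ) : ℝ :=
  ∫ A in (-(Real.pi / 2))..(Real.pi / 2), Real.cos (A / 2) ^ (2 * n)

lemma KK_int (n : ℕ) : IntervalIntegrable (fun A : ℝ => Real.cos (A / 2) ^ (2 * n))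
    MeasureTheory.volume (-(Real.pi / 2)) (Real.pi / 2) :=
  Continuous.intervalIntegrable (by fun_prop) _ _

lemma KK_rec (n : ℕ) : ((n : ℝ) + 1) * KK (n + 1) =
    (2 * n + 1) / 2 * KK n + 2 * (1 / 2) ^ (n + 1) := by
  have hd : ∀ x ∈ Set.uIcc (-(Real.pi / 2)) (Real.pi / 2),
      HasDerivAt (fun A : ℝ => Real.sin (A / 2) * Real.cos (A / 2) ^ (2 * n + 1))
        (((n : ℝ) + 1) * Real.cos (x / 2) ^ (2 * (n + 1))
          - (2 * n + 1) / 2 * Real.cos (x / 2) ^ (2 * n)) x := by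
    intro x _
    have h0 : HasDerivAt (fun A : ℝ => A / 2) (1 / 2) x := (hasDerivAt_id x).div_const 2
    have h := h0.sin.mul (h0.cos.pow (2 * n + 1))
    refine h.congr_deriv ?_
    have hs := Real.sin_sq_add_cos_sq (x / 2)
    have hs' : Real.sin (x / 2) ^ 2 = 1 - Real.cos (x / 2) ^ 2 := by linarith
    simp only [Nat.add_sub_cancel, Pi.pow_apply]
    push_cast
    linear_combination (-(2 * (n : ℝ) + 1) / 2 * Real.cos (x / 2) ^ (2 * n)) * hs'
  have hF := intervalIntegral.integral_eq_sub_of_hasDerivAt hd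
    (Continuous.intervalIntegrable (by fun_prop) _ _)
  rw [intervalIntegral.integral_sub ((KK_int (n + 1)).const_mul _) ((KK_int n).const_mul _),
    intervalIntegral.integral_const_mul, intervalIntegral.integral_const_mul] at hF
  have e1 : Real.pi / 2 / 2 = Real.pi / 4 := by ring
  have e2 : -(Real.pi / 2) / 2 = -(Real.pi / 4) := by ring
  rw [e1, e2, Real.sin_neg, Real.cos_neg, Real.sin_pi_div_four, Real.cos_pi_div_four] at hF
  have hsq : (√2 / 2) ^ 2 = (1 / 2 : ℝ) := by
    rw [div_pow, Real.sq_sqrt (by norm_num)]; norm_num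
  have hp : √2 / 2 * (√2 / 2) ^ (2 * n + 1) = (1 / 2 : ℝ) ^ (n + 1) := by
    rw [← hsq, ← pow_mul]; ring
  unfold KK
  linear_combination hF + 2 * hp

lemma KK_zero : KK 0 = Real.pi := by
  simp [KK]

lemma aW_rec (n : ℕ) : 1 / (2 ^ (n + 1) * aW (n + 1)) * (2 * n + 2) =
    (2 * n + 1) * (1 / (2 ^ n * aW n)) := by
  unfold aW
  have h : 2 * (n + 1) = 2 * n + 1 + 1 := by ring
  rw [h, Nat.factorial_succ, Nat.factorial_succ, Nat.factorial_succ]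
  push_cast
  field_simp
  ring

lemma KK_ge (n : ℕ) : (Real.pi + 2) * (1 / (2 ^ (n + 1) * aW (n + 1))) ≤ KK (n + 1) := by
  induction n with
  | zero =>
    have h := KK_rec 0
    rw [KK_zero] at h
    norm_num at h
    norm_num [aW, h]
    linarith
  | succ n ih =>
    have h := KK_rec (n + 1)
    have h2 := aW_rec (n + 1)
    have h3 : (0 : ℝ) < (1 / 2) ^ (n + 1 + 1) := by positivity
    push_cast at h h2
    set c := 1 / (2 ^ (n + 1 + 1) * aW (n + 1 + 1))
    set d := 1 / (2 ^ (n + 1) * aW (n + 1))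
    have hn : (0 : ℝ) < (n : ℝ) + 1 + 1 := by positivity
    refine le_of_mul_le_mul_left ?_ hn
    have h4 := mul_le_mul_of_nonneg_left ih
      (show (0 : ℝ) ≤ (2 * ((n : ℝ) + 1) + 1) / 2 by positivity)
    rw [h]
    have h5 : ((n : ℝ) + 1 + 1) * ((Real.pi + 2) * c) =
        (2 * ((n : ℝ) + 1) + 1) / 2 * ((Real.pi + 2) * d) := by
      linear_combination (Real.pi + 2) / 2 * h2
    linarith

/-- `∫_{−π/2}^{π/2} cos A · cos^{2n}(A/2) dA ≥ (n/(n+1)) (π+2)/(2^n a_n)` for `n ≥ 2`. -/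
theorem stmt16 (n : ℕ) (hn : 2 ≤ n) :
    ((n : ℝ) / ((n : ℝ) + 1)) * (Real.pi + 2) / (2 ^ n * aW n) ≤
      ∫ A in (-(Real.pi / 2))..(Real.pi / 2),
        Real.cos A * Real.cos (A / 2) ^ (2 * n) := by
  have hI : (∫ A in (-(Real.pi / 2))..(Real.pi / 2),
        Real.cos A * Real.cos (A / 2) ^ (2 * n)) = 2 * KK (n + 1) - KK n := by
    unfold KK
    rw [← intervalIntegral.integral_const_mul,
      ← intervalIntegral.integral_sub ((KK_int (n + 1)).const_mul _) (KK_int n)]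
    congr 1
    funext A
    have h := Real.cos_two_mul (A / 2)
    rw [show 2 * (A / 2) = A by ring] at h
    rw [h]; ring
  rw [hI]
  obtain ⟨m, rfl⟩ : ∃ m, n = m + 1 := ⟨n - 1, by omega⟩
  have h1 := KK_ge m
  have h2 := KK_rec (m + 1)
  have h3 : (0 : ℝ) < (1 / 2) ^ (m + 1 + 1) := by positivity
  have hn : (0 : ℝ) < ((m + 1 : ℕ) : ℝ) + 1 := by positivity
  have hm : (0 : ℝ) ≤ ((m + 1 : ℕ) : ℝ) := by positivity
  have h4 := mul_le_mul_of_nonneg_left h1 hm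
  rw [mul_div_assoc, div_mul_eq_mul_div, div_le_iff₀ hn, div_eq_mul_one_div (Real.pi + 2)]
  linarith
end

section
/- For every integer n ≥ 2, the following exact identity holds: ∫_{π/2}^{3π/2} (−cos A) · cos^{2n}(A/2) dA = ∫_{−π/2}^{π/2} cos A · cos^{2n}(A/2) dA − (π/(2^n a_n)) · (2n/(n+1)). -/
open Real Filter

lemma W_step (n : ℕ) : (∫ x in (-(π / 4))..(3 * π / 4), Real.cos x ^ (2 * (n + 1))) =
    (2 * n + 1) / (2 * n + 2) * ∫ x in (-(π / 4))..(3 * π / 4), Real.cos x ^ (2 * n) := by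
  have h := @integral_cos_pow (-(π / 4)) (3 * π / 4) (2 * n)
  have e : 3 * π / 4 = -(π / 4) + π := by ring
  have hc : Real.cos (3 * π / 4) = -Real.cos (-(π / 4)) := by rw [e, Real.cos_add_pi]
  have hs : Real.sin (3 * π / 4) = -Real.sin (-(π / 4)) := by rw [e, Real.sin_add_pi]
  have ho : Odd (2 * n + 1) := ⟨n, rfl⟩
  rw [hc, hs, ho.neg_pow] at h
  rw [show 2 * (n + 1) = 2 * n + 2 by ring, h]
  push_cast
  ring

lemma W_val (n : ℕ) : (∫ x in (-(π / 4))..(3 * π / 4), Real.cos x ^ (2 * n)) =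
    π / (2 ^ n * aW n) := by
  induction n with
  | zero => simp [aW]; ring
  | succ k ih =>
    rw [W_step, ih]
    unfold aW
    rw [show 2 * (k + 1) = 2 * k + 1 + 1 by ring, Nat.factorial_succ (2 * k + 1),
      Nat.factorial_succ (2 * k), Nat.factorial_succ k]
    have h1 : (Nat.factorial k : ℝ) ≠ 0 := by positivity
    have h2 : (Nat.factorial (2 * k) : ℝ) ≠ 0 := by positivity
    push_cast
    field_simp
    ring

/-- Exact identity relating the two integrals:
`∫_{π/2}^{3π/2} (−cos A) cos^{2n}(A/2) dA
  = ∫_{−π/2}^{π/2} cos A cos^{2n}(A/2) dA − (π/(2^n a_n)) (2n/(n+1))`. -/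
theorem stmt17 (n : ℕ) (hn : 2 ≤ n) :
    (∫ A in (Real.pi / 2)..(3 * Real.pi / 2),
        (-Real.cos A) * Real.cos (A / 2) ^ (2 * n)) =
      (∫ A in (-(Real.pi / 2))..(Real.pi / 2),
        Real.cos A * Real.cos (A / 2) ^ (2 * n)) -
      (Real.pi / (2 ^ n * aW n)) * (2 * (n : ℝ) / ((n : ℝ) + 1)) := by
  have hcont : Continuous fun A : ℝ => Real.cos A * Real.cos (A / 2) ^ (2 * n) := by fun_prop
  have hadd := intervalIntegral.integral_add_adjacent_intervals
    (hcont.intervalIntegrable (μ := MeasureTheory.volume) (-(π / 2)) (π / 2))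
    (hcont.intervalIntegrable (π / 2) (3 * π / 2))
  have hsub : (∫ A in (-(π / 2))..(3 * π / 2), Real.cos A * Real.cos (A / 2) ^ (2 * n)) =
      2 * ∫ x in (-(π / 4))..(3 * π / 4),
        (2 * Real.cos x ^ (2 * (n + 1)) - Real.cos x ^ (2 * n)) := by
    have h := intervalIntegral.integral_comp_div (a := -(π / 2)) (b := 3 * π / 2)
      (fun x : ℝ => 2 * Real.cos x ^ (2 * (n + 1)) - Real.cos x ^ (2 * n)) (two_ne_zero' ℝ)
    rw [show -(π / 2) / 2 = -(π / 4) by ring, show 3 * π / 2 / 2 = 3 * π / 4 by ring,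
      smul_eq_mul] at h
    rw [← h]
    refine intervalIntegral.integral_congr fun A _ => ?_
    have : Real.cos A = 2 * Real.cos (A / 2) ^ 2 - 1 := by
      rw [← Real.cos_two_mul]; congr 1; ring
    simp only [this]
    ring
  rw [intervalIntegral.integral_sub
    (Continuous.intervalIntegrable (by fun_prop) _ _)
    (Continuous.intervalIntegrable (by fun_prop) _ _),
    intervalIntegral.integral_const_mul, W_step, W_val] at hsub
  simp only [neg_mul, intervalIntegral.integral_neg]
  have hk : 2 * (2 * ((2 * (n : ℝ) + 1) / (2 * n + 2) * (π / (2 ^ n * aW n))) -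
      π / (2 ^ n * aW n)) = (π / (2 ^ n * aW n)) * (2 * (n : ℝ) / ((n : ℝ) + 1)) := by
    generalize π / (2 ^ n * aW n) = c
    field_simp
    ring
  linarith
end

section
/- (Exponential decay of the phase diameter) Let n ≥ 2 be an integer and let (θ_1,...,θ_N) be a global solution of the Winfree model of order n with identical natural frequencies ν_i = ν > 0 for all i. Define R(t) := (max_i θ_i(t) − min_i θ_i(t))/2. Assume 0 < κ < ν/(2^{n+1} a_n), 0 < α < ( (π/(2^{n+1} a_n)) · n/(n+1) − 1/2^n ) · (1/√(2n−1)) · (2n/(2n−1))^{n−1}, and R(0) < α · exp( −α √(2n−1) ((2n−1)/(2n))^{n−1} − 1/2^{n−1} ). Then there exist positive constants β̃_1, β̃_2, Λ̃_1, Λ̃_2 such that for all t ≥ 0, β̃_1 e^{−Λ̃_1 t} R(0) ≤ R(t) ≤ β̃_2 e^{−Λ̃_2 t} R(0) < α. -/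
open Real Filter

lemma aW_succ (n : ℕ) : aW (n+1) * (2 * n + 1) = aW n * (n + 1) := by
  unfold aW
  have h : 2 * (n+1) = 2 * n + 1 + 1 := by ring
  rw [h, Nat.factorial_succ (2*n+1), Nat.factorial_succ (2*n), Nat.factorial_succ n]
  have h1 : ((2*n).factorial : ℝ) ≠ 0 := by positivity
  push_cast
  field_simp
  ring

lemma two_pow_mul_aW (n : ℕ) : 1 ≤ 2 ^ n * aW n := by
  induction n with
  | zero => simp [aW]
  | succ n ih =>
    have h := aW_succ n
    have h2 : (0:ℝ) < 2 * n + 1 := by positivity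
    have : aW (n+1) = aW n * (n + 1) / (2 * n + 1) := by
      rw [eq_div_iff h2.ne']; exact h
    rw [this, pow_succ]
    have e : (2:ℝ)^n * 2 * (aW n * (n+1) / (2*n+1)) = (2^n * aW n) * ((2*n+2)/(2*n+1)) := by
      field_simp
    rw [e]
    have : (1:ℝ) ≤ (2*n+2)/(2*n+1) := by
      rw [le_div_iff₀ h2]; linarith
    nlinarith

lemma jint_succ (n : ℕ) : ((n:ℝ)+1) * ∫ x in (0:ℝ)..(2*π), (1 + cos x)^(n+1) =
    (2*n+1) * ∫ x in (0:ℝ)..(2*π), (1 + cos x)^n := by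
  have hd : ∀ x ∈ Set.uIcc (0:ℝ) (2*π), HasDerivAt (fun x => (1+cos x)^n * sin x)
      (((n:ℝ)+1) * (1 + cos x)^(n+1) - (2*n+1) * (1 + cos x)^n) x := by
    intro x _
    have h1 : HasDerivAt (fun x => 1 + cos x) (-sin x) x := (hasDerivAt_cos x).const_add 1
    have h2 := (h1.pow n).mul (hasDerivAt_sin x)
    refine h2.congr_deriv ?_
    have hs : sin x ^ 2 = (1 + cos x) * (1 - cos x) := by
      have := sin_sq_add_cos_sq x; linarith
    rcases n with _ | k
    · simp
    · simp only [Nat.add_sub_cancel]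
      push_cast
      simp only [Pi.pow_apply]
      have : ((k:ℝ)+1) * (1 + cos x)^k * -sin x * sin x = -((k:ℝ)+1) * (1 + cos x)^k * (sin x^2) := by ring
      rw [this, hs]; ring
  have hc : Continuous (fun x : ℝ => ((n:ℝ)+1) * (1 + cos x)^(n+1) - (2*n+1) * (1 + cos x)^n) := by
    fun_prop
  have := intervalIntegral.integral_eq_sub_of_hasDerivAt hd (hc.intervalIntegrable _ _)
  rw [intervalIntegral.integral_sub, intervalIntegral.integral_const_mul,
    intervalIntegral.integral_const_mul] at this
  · simp at this; linarith
  · exact Continuous.intervalIntegrable (by fun_prop) _ _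
  · exact Continuous.intervalIntegrable (by fun_prop) _ _

lemma jint (n : ℕ) : aW n * ∫ x in (0:ℝ)..(2*π), (1 + cos x)^n = 2 * π := by
  induction n with
  | zero => simp [aW]
  | succ n ih =>
    have h := aW_succ n
    have h1 := jint_succ n
    have h2 : (0:ℝ) < 2 * n + 1 := by positivity
    have h3 : (0:ℝ) < n + 1 := by positivity
    set A := ∫ x in (0:ℝ)..(2*π), (1 + cos x)^n
    set B := ∫ x in (0:ℝ)..(2*π), (1 + cos x)^(n+1)
    have : (aW (n+1) * B) * ((2*n+1)*(n+1)) = 2 * π * ((2*n+1)*(n+1)) := by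
      calc _ = (aW (n+1) * (2*n+1)) * ((n+1) * B) := by ring
        _ = (aW n * A) * ((2*n+1)*(n+1)) := by rw [h, h1]; ring
        _ = _ := by rw [ih]
    exact mul_right_cancel₀ (by positivity) this

lemma int_infl_cos (n : ℕ) : ∫ x in (0:ℝ)..(2*π), influence n x * cos x = 2 * π * (n / (n+1)) := by
  have h1 := jint_succ n
  have h0 := jint n
  have e : ∀ x, influence n x * cos x = aW n * ((1+cos x)^(n+1) - (1+cos x)^n) := by
    intro x; unfold influence; ring
  simp_rw [e]
  rw [intervalIntegral.integral_const_mul, intervalIntegral.integral_sub]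
  · have h3 : (0:ℝ) < n + 1 := by positivity
    set A := ∫ x in (0:ℝ)..(2*π), (1 + cos x)^n
    set B := ∫ x in (0:ℝ)..(2*π), (1 + cos x)^(n+1)
    have hB : B = (2*n+1) * A / (n+1) := by rw [eq_div_iff h3.ne']; linarith
    rw [hB, ← h0]; field_simp; ring
  · exact Continuous.intervalIntegrable (by fun_prop) _ _
  · exact Continuous.intervalIntegrable (by fun_prop) _ _

lemma amgm (M : ℕ) (s : ℝ) (hs : 0 ≤ s) : s^M * (M + 1 - M * s) ≤ 1 := by
  induction M with
  | zero => simp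
  | succ M ih =>
    push_cast
    have : s^(M+1) * ((M:ℝ) + 1 + 1 - (M+1)*s) = s^M * (M + 1 - M * s) - (M+1) * s^M * (1-s)^2 := by ring
    rw [this]
    have : 0 ≤ ((M:ℝ)+1) * s^M * (1-s)^2 := by positivity
    linarith

lemma lip_aux (n : ℕ) (hn : 1 ≤ n) (x : ℝ) :
    n * (1 + cos x)^(n-1) * |sin x| ≤
      2^(n-1) * (√(2*(n:ℝ)-1) * ((2*(n:ℝ)-1)/(2*n))^(n-1)) := by
  obtain ⟨k, rfl⟩ : ∃ k, n = k+1 := ⟨n-1, by omega⟩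
  simp only [Nat.add_sub_cancel]
  push_cast
  have hu : 0 ≤ 1 + cos x := by linarith [neg_one_le_cos x]
  have hk : (0:ℝ) < 2*(k+1)-1 := by have : (0:ℝ) ≤ k := by positivity
                                    linarith
  have hk2 : (0:ℝ) < k + 1 := by positivity
  refine (sq_le_sq₀ (by positivity) (by positivity)).1 ?_
  have hs : |sin x| ^ 2 = (1 + cos x) * (1 - cos x) := by
    rw [sq_abs]; have := sin_sq_add_cos_sq x; linarith
  set p : ℝ := (2*((k:ℝ)+1)-1)/(2*(k+1)) with hp
  have hp0 : 0 < p := by positivity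
  obtain ⟨s, hs2⟩ : ∃ s, 1 + cos x = 2 * p * s := ⟨(1+cos x)/(2*p), by field_simp⟩
  have hs0 : 0 ≤ s := by
    by_contra h; push Not at h
    nlinarith
  have ha := amgm (2*k+1) s hs0
  push_cast at ha
  have e1 : (((k:ℝ)+1) * (1 + cos x)^k * |sin x|)^2 =
      ((2^k * p^k)^2 * (2*(k+1)-1)) * (s^(2*k+1) * (2*k+1+1 - (2*k+1)*s)) := by
    rw [mul_pow, mul_pow, hs, show 1 - cos x = 2 - 2 * p * s by linarith, hs2, mul_pow, mul_pow]
    have h3 : 2*((k:ℝ)+1)-1 = p * (2*(k+1)) := by rw [hp]; field_simp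
    have h4 : (2*(k:ℝ)+1) = p * (2*(k+1)) := by rw [← h3]; ring
    rw [show 2*(k:ℝ)+1+1 - (2*k+1)*s = 2*(k+1) - (2*k+1)*s by ring, h3, h4]
    ring
  have e2 : (2^k * (√(2*((k:ℝ)+1)-1) * p^k))^2 = (2^k * p^k)^2 * (2*(k+1)-1) := by
    have := sq_sqrt hk.le
    calc _ = (2^k * p^k)^2 * (√(2*((k:ℝ)+1)-1))^2 := by ring
      _ = _ := by rw [this]
  rw [e1, e2]
  exact mul_le_of_le_one_right (by positivity) ha

lemma infl_lip (n : ℕ) (hn : 1 ≤ n) (x y : ℝ) :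
    |influence n x - influence n y| ≤
      aW n * (2^(n-1) * (√(2*(n:ℝ)-1) * ((2*(n:ℝ)-1)/(2*n))^(n-1))) * |x - y| := by
  have hd : ∀ z ∈ (Set.univ : Set ℝ), HasDerivWithinAt (influence n)
      (aW n * (n * (1 + cos z)^(n-1) * -sin z)) Set.univ z := by
    intro z _
    have h1 : HasDerivAt (fun x => 1 + cos x) (-sin z) z := (hasDerivAt_cos z).const_add 1
    exact ((h1.pow n).const_mul (aW n)).hasDerivWithinAt
  have := Convex.norm_image_sub_le_of_norm_hasDerivWithin_le (C := aW n * (2^(n-1) * (√(2*(n:ℝ)-1) * ((2*(n:ℝ)-1)/(2*n))^(n-1)))) hd ?_ convex_univ (Set.mem_univ y) (Set.mem_univ x)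
  · simpa using this
  · intro z _
    have hu : 0 ≤ 1 + cos z := by linarith [neg_one_le_cos z]
    rw [norm_mul, norm_mul, norm_neg, Real.norm_of_nonneg (aW_pos n).le,
      Real.norm_of_nonneg (by positivity), Real.norm_eq_abs]
    exact mul_le_mul_of_nonneg_left (lip_aux n hn z) (aW_pos n).le

lemma int_pos_cos : ∫ x in (0:ℝ)..(2*π), max (cos x) 0 = 2 := by
  have hc : Continuous (fun x : ℝ => max (cos x) 0) := by fun_prop
  have hper : Function.Periodic (fun x : ℝ => max (cos x) 0) (2*π) := by
    intro x; simp
  have h := hper.intervalIntegral_add_eq 0 (-(π/2))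
  rw [zero_add] at h
  rw [h, ← intervalIntegral.integral_add_adjacent_intervals (b := π/2)
    (hc.intervalIntegrable _ _) (hc.intervalIntegrable _ _)]
  have h1 : ∫ x in (-(π/2))..(π/2), max (cos x) 0 = ∫ x in (-(π/2))..(π/2), cos x := by
    apply intervalIntegral.integral_congr
    intro x hx
    rw [Set.uIcc_of_le (by linarith [pi_pos])] at hx
    exact max_eq_left (cos_nonneg_of_mem_Icc hx)
  have h2 : ∫ x in (π/2)..(-(π/2) + 2*π), max (cos x) 0 = ∫ x in (π/2)..(-(π/2)+2*π), (0:ℝ) := by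
    apply intervalIntegral.integral_congr
    intro x hx
    rw [Set.uIcc_of_le (by linarith [pi_pos])] at hx
    exact max_eq_right (cos_nonpos_of_pi_div_two_le_of_le hx.1 (by linarith [hx.2]))
  rw [h1, h2]
  simp
  norm_num

lemma int_neg_cos : ∫ x in (0:ℝ)..(2*π), max (-cos x) 0 = 2 := by
  have e : ∀ x : ℝ, max (-cos x) 0 = max (cos x) 0 - cos x := by
    intro x
    rcases le_total 0 (cos x) with h | h
    · rw [max_eq_left h, max_eq_right (by linarith)]; ring
    · rw [max_eq_right h, max_eq_left (by linarith)]; ring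
  simp_rw [e]
  rw [intervalIntegral.integral_sub, int_pos_cos]
  · simp
  · exact Continuous.intervalIntegrable (by fun_prop) _ _
  · exact Continuous.intervalIntegrable (by fun_prop) _ _

lemma per_bound (f f1 f2 : ℝ → ℝ) (m b : ℝ) (hf : Continuous f) (hf1 : Continuous f1)
    (hf2 : Continuous f2) (p1 : Function.Periodic f1 (2*π))
    (p2 : Function.Periodic f2 (2*π))
    (h1 : ∀ x, f1 x ≤ f x) (h2 : ∀ x, f2 x ≤ f x) (h2n : ∀ x, f2 x ≤ 0) (hm : 0 ≤ m)
    (i1 : ∫ x in (0:ℝ)..(2*π), f1 x = m) (i2 : ∫ x in (0:ℝ)..(2*π), f2 x = -b)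
    (x y : ℝ) (hxy : x ≤ y) :
    -b ≤ ∫ z in x..y, f z ∧ m * ((y-x)/(2*π) - 1) - b ≤ ∫ z in x..y, f z := by
  have hpi := pi_pos
  have iI : ∀ {g : ℝ → ℝ}, Continuous g → ∀ a b, IntervalIntegrable g MeasureTheory.volume a b :=
    fun hg a b => hg.intervalIntegrable a b
  have step : ∀ k : ℕ, k * m ≤ ∫ z in x..(x + k * (2*π)), f z := by
    intro k
    induction k with
    | zero => simp
    | succ k ih =>
      rw [← intervalIntegral.integral_add_adjacent_intervals (b := x + k * (2*π)) (iI hf _ _) (iI hf _ _)]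
      have e : x + ((k+1 : ℕ):ℝ) * (2*π) = (x + k * (2*π)) + 2*π := by push_cast; ring
      rw [e]
      have := p1.intervalIntegral_add_eq (x + k * (2*π)) 0
      rw [zero_add, i1] at this
      have h3 : ∫ z in (x + k * (2*π))..((x + k * (2*π)) + 2*π), f1 z ≤
          ∫ z in (x + k * (2*π))..((x + k * (2*π)) + 2*π), f z :=
        intervalIntegral.integral_mono_on (by linarith) (iI hf1 _ _) (iI hf _ _) (fun z _ => h1 z)
      push_cast
      linarith
  set k := ⌊(y-x)/(2*π)⌋₊
  have hk1 : (k:ℝ) ≤ (y-x)/(2*π) := Nat.floor_le (by apply div_nonneg <;> linarith)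
  have hk2 : (y-x)/(2*π) < k + 1 := Nat.lt_floor_add_one _
  rw [le_div_iff₀ (by positivity)] at hk1
  have hk2' := hk2
  rw [div_lt_iff₀ (by positivity)] at hk2
  set w := x + k * (2*π)
  have hw : w ≤ y := by simp only [w]; linarith
  have hw2 : y ≤ w + 2*π := by simp only [w]; linarith
  have a1 : ∫ z in w..y, f2 z ≤ ∫ z in w..y, f z :=
    intervalIntegral.integral_mono_on hw (iI hf2 _ _) (iI hf _ _) (fun z _ => h2 z)
  have a2 : ∫ z in y..(w+2*π), f2 z ≤ 0 := by
    have := intervalIntegral.integral_mono_on hw2 (iI hf2 y (w+2*π)) (iI continuous_const _ _) (fun z _ => h2n z)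
    simpa using this
  have a3 := intervalIntegral.integral_add_adjacent_intervals (iI hf2 w y) (iI hf2 y (w+2*π))
  have a4 := p2.intervalIntegral_add_eq w 0
  rw [zero_add, i2] at a4
  have a5 := intervalIntegral.integral_add_adjacent_intervals (iI hf x w) (iI hf w y)
  have a6 := step k
  have a7 : 0 ≤ k * m := by positivity
  have a8 : m * ((y-x)/(2*π) - 1) ≤ k * m := by nlinarith
  constructor <;> linarith

lemma tan_scale (s x : ℝ) (hs : 1 ≤ s) (hx : 0 ≤ x) (hsx : s * x < π/2) : s * tan x ≤ tan (s * x) := by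
  have hcos : ∀ y, 0 ≤ y → y ≤ x → 0 < cos (s*y) ∧ 0 < cos y ∧ cos (s*y) ≤ cos y := by
    intro y h0 h1
    have : s * y ≤ s * x := by gcongr
    have h3 : y ≤ s * y := by nlinarith
    refine ⟨cos_pos_of_mem_Ioo ⟨by nlinarith [pi_pos], by linarith⟩,
      cos_pos_of_mem_Ioo ⟨by linarith [pi_pos], by linarith⟩, ?_⟩
    exact cos_le_cos_of_nonneg_of_le_pi h0 (by linarith [pi_pos]) h3
  have hd : ∀ y, 0 ≤ y → y ≤ x → HasDerivAt (fun y => tan (s*y) - s * tan y)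
      (1 / cos (s*y)^2 * s - s * (1 / cos y^2)) y := by
    intro y h0 h1
    obtain ⟨c1, c2, _⟩ := hcos y h0 h1
    have k1 : HasDerivAt (fun y => s*y) s y := by simpa using (hasDerivAt_id y).const_mul s
    exact ((hasDerivAt_tan c1.ne').comp y k1).sub ((hasDerivAt_tan c2.ne').const_mul s)
  have mono : MonotoneOn (fun y => tan (s*y) - s * tan y) (Set.Icc 0 x) := by
    apply monotoneOn_of_hasDerivWithinAt_nonneg (convex_Icc 0 x)
      (f' := fun y => (1 / cos (s*y)^2 * s - s * (1 / cos y^2)))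
    · intro y hy; exact (hd y hy.1 hy.2).continuousAt.continuousWithinAt
    · intro y hy; rw [interior_Icc] at hy; exact (hd y hy.1.le hy.2.le).hasDerivWithinAt
    · intro y hy; rw [interior_Icc] at hy
      obtain ⟨c1, c2, c3⟩ := hcos y hy.1.le hy.2.le
      have : 1 / cos y^2 ≤ 1 / cos (s*y)^2 := by gcongr
      nlinarith
  have := mono (Set.left_mem_Icc.2 hx) (Set.right_mem_Icc.2 hx) hx
  simp at this
  linarith

noncomputable def ff1 (n : ℕ) (c E x : ℝ) : ℝ :=
  c * ((2/3) * (influence n x * cos x) - (4/3) * aW n * max (-cos x) 0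
    - (2/3) * E * max (cos x) 0 - 2 * E * max (-cos x) 0)

noncomputable def ff2 (n : ℕ) (c E x : ℝ) : ℝ :=
  -(2 * c * (aW n + E)) * max (-cos x) 0

noncomputable def ff (n : ℕ) (c E x : ℝ) : ℝ := max (ff1 n c E x) (ff2 n c E x)

lemma infl_cont (n : ℕ) : Continuous (influence n) := by unfold influence; fun_prop

lemma ff1_cont (n : ℕ) (c E : ℝ) : Continuous (ff1 n c E) := by
  have := infl_cont n
  unfold ff1; fun_prop

lemma ff2_cont (n : ℕ) (c E : ℝ) : Continuous (ff2 n c E) := by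
  unfold ff2; fun_prop

lemma ff_cont (n : ℕ) (c E : ℝ) : Continuous (ff n c E) :=
  (ff1_cont n c E).max (ff2_cont n c E)

lemma ff1_int (n : ℕ) (c E : ℝ) : ∫ x in (0:ℝ)..(2*π), ff1 n c E x =
    c * ((2/3) * (2 * π * (n/(n+1))) - (8/3) * aW n - (16/3) * E) := by
  have h0 := infl_cont n
  unfold ff1
  rw [intervalIntegral.integral_const_mul, intervalIntegral.integral_sub, intervalIntegral.integral_sub,
    intervalIntegral.integral_sub, intervalIntegral.integral_const_mul, intervalIntegral.integral_const_mul,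
    intervalIntegral.integral_const_mul, intervalIntegral.integral_const_mul, int_infl_cos,
    int_pos_cos, int_neg_cos]
  · ring
  all_goals exact Continuous.intervalIntegrable (by fun_prop) _ _

lemma ff2_int (n : ℕ) (c E : ℝ) : ∫ x in (0:ℝ)..(2*π), ff2 n c E x = -(4 * c * (aW n + E)) := by
  unfold ff2
  rw [intervalIntegral.integral_const_mul, int_neg_cos]; ring

lemma ff_bound (n : ℕ) (c E m : ℝ) (hc : 0 ≤ c) (hE : 0 ≤ E) (hm : 0 ≤ m)
    (hm' : m = c * ((2/3) * (2 * π * (n/(n+1))) - (8/3) * aW n - (16/3) * E))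
    (x y : ℝ) (hxy : x ≤ y) :
    -(4 * c * (aW n + E)) ≤ ∫ z in x..y, ff n c E z ∧
    m * ((y-x)/(2*π) - 1) - (4 * c * (aW n + E)) ≤ ∫ z in x..y, ff n c E z := by
  apply per_bound (ff n c E) (ff1 n c E) (ff2 n c E) m _ (ff_cont n c E) (ff1_cont n c E) (ff2_cont n c E)
    _ _ (fun x => le_max_left _ _) (fun x => le_max_right _ _) _ hm _ (ff2_int n c E) x y hxy
  · intro x; simp [ff1, influence]
  · intro x; simp [ff2]
  · intro x
    have := aW_pos n
    have : 0 ≤ (2 * c * (aW n + E)) * max (-cos x) 0 := by positivity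
    unfold ff2; linarith
  · rw [ff1_int, hm']

lemma infl_nonneg (n : ℕ) (x : ℝ) : 0 ≤ influence n x := by
  have := aW_pos n
  have : 0 ≤ 1 + cos x := by linarith [neg_one_le_cos x]
  unfold influence; positivity

lemma infl_le (n : ℕ) (x : ℝ) : influence n x ≤ 2 ^ n * aW n := by
  have := aW_pos n
  have : 0 ≤ 1 + cos x := by linarith [neg_one_le_cos x]
  have : (1 + cos x)^n ≤ 2^n := pow_le_pow_left₀ this (by linarith [cos_le_one x]) n
  unfold influence; nlinarith

lemma ff_pt (n : ℕ) (c E ν J x d : ℝ) (hc : 0 ≤ c) (hE : 0 ≤ E) (hν : 0 < ν) (hJ : 0 ≤ J)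
    (hJI : |J - influence n x| ≤ E) (h1 : ν/2 ≤ d) (h2 : d ≤ 3*ν/2) :
    ff n c E x * d ≤ c * ν * J * cos x := by
  have ha := aW_pos n
  have hI := infl_nonneg n x
  obtain ⟨e1, e2⟩ := abs_le.1 hJI
  have hd : 0 < d := by linarith
  rcases le_total 0 (cos x) with h | h
  · have m1 : max (cos x) 0 = cos x := max_eq_left h
    have m2 : max (-cos x) 0 = 0 := max_eq_right (by linarith)
    have f2 : ff2 n c E x = 0 := by simp [ff2, m2]
    have f1 : ff1 n c E x = (2/3) * (c * cos x) * (influence n x - E) := by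
      simp only [ff1, m1, m2]; ring
    have hcc : 0 ≤ c * cos x := by positivity
    have g : 0 ≤ c * ν * J * cos x := by positivity
    unfold ff
    rcases max_choice (ff1 n c E x) (ff2 n c E x) with h' | h' <;> rw [h']
    · rw [f1]
      rcases le_total 0 (influence n x - E) with k | k
      · calc _ = (c * cos x) * (influence n x - E) * (2/3 * d) := by ring
          _ ≤ (c * cos x) * J * ν := by
            gcongr
            · linarith
            · linarith
          _ = _ := by ring
      · have : (2/3) * (c * cos x) * (influence n x - E) ≤ 0 :=
          mul_nonpos_of_nonneg_of_nonpos (by positivity) k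
        nlinarith
    · rw [f2]; linarith
  · have m1 : max (cos x) 0 = 0 := max_eq_right h
    have m2 : max (-cos x) 0 = -cos x := max_eq_left (by linarith)
    set u := -cos x with hu
    have hcx : cos x = -u := by rw [hu]; ring
    have hu0 : 0 ≤ u := by linarith
    have hIa : influence n x ≤ aW n := by
      have h3 : (1 + cos x)^n ≤ 1 := pow_le_one₀ (by linarith [neg_one_le_cos x]) (by linarith)
      unfold influence; nlinarith
    have hcu : 0 ≤ c * u := by positivity
    have key : ff n c E x ≤ -(2 * (c * u) * (influence n x + E)) := by
      apply max_le
      · unfold ff1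
        rw [← hu, m1, m2, hcx]
        nlinarith
      · unfold ff2
        rw [← hu, m2]
        nlinarith
    have k2 : (c*u) * J * ν ≤ (c * u) * (influence n x + E) * (2 * d) := by
      gcongr
      · linarith
      · linarith
    calc _ ≤ -(2 * (c * u) * (influence n x + E)) * d := by gcongr
      _ = -((c * u) * (influence n x + E) * (2 * d)) := by ring
      _ ≤ -((c*u) * J * ν) := by linarith
      _ = _ := by rw [hcx]; ring

lemma seg (n : ℕ) (c E ν : ℝ) (hc : 0 ≤ c) (hE : 0 ≤ E) (hν : 0 < ν) (r φ J : ℝ → ℝ)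
    (hr : ∀ t, 0 ≤ t → HasDerivAt r (-(c * ν * J t * cos (φ t) * sin (r t))) t)
    (hφ : ∀ t, 0 ≤ t → HasDerivAt φ (ν - c * ν * J t * sin (φ t) * cos (r t)) t)
    (hJ0 : ∀ t, 0 ≤ t → 0 ≤ J t) (hJ1 : ∀ t, 0 ≤ t → c * J t ≤ 1/2)
    (hr0 : ∀ t, 0 ≤ t → 0 ≤ r t) (T : ℝ) (hT : 0 ≤ T)
    (hrp : ∀ t, 0 ≤ t → t ≤ T → r t < π)
    (hJI : ∀ t, 0 ≤ t → t ≤ T → |J t - influence n (φ t)| ≤ E) :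
    ν / 2 * T ≤ φ T - φ 0 ∧
    tan (r T / 2) ≤ tan (r 0 / 2) * exp (-∫ z in (φ 0)..(φ T), ff n c E z) := by
  have hd : ∀ t, 0 ≤ t → ν/2 ≤ ν - c * ν * J t * sin (φ t) * cos (r t) ∧
      ν - c * ν * J t * sin (φ t) * cos (r t) ≤ 3 * ν / 2 := by
    intro t ht
    have h1 : |sin (φ t) * cos (r t)| ≤ 1 := by
      rw [abs_mul]; exact mul_le_one₀ (abs_sin_le_one _) (abs_nonneg _) (abs_cos_le_one _)
    obtain ⟨a1, a2⟩ := abs_le.1 h1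
    have h2 := hJ1 t ht
    have h3 : 0 ≤ c * J t := mul_nonneg hc (hJ0 t ht)
    have h4 : ν * (c * J t) ≤ ν * (1/2) := by gcongr
    have h5 : 0 ≤ ν * (c * J t) := by positivity
    have e : c * ν * J t * sin (φ t) * cos (r t) = (ν * (c * J t)) * (sin (φ t) * cos (r t)) := by ring
    rw [e]
    constructor <;> nlinarith
  constructor
  · have mono : MonotoneOn (fun t => φ t - ν/2 * t) (Set.Icc 0 T) := by
      have hdd : ∀ t, 0 ≤ t → HasDerivAt (fun t => φ t - ν/2 * t)
          ((ν - c * ν * J t * sin (φ t) * cos (r t)) - ν/2) t := by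
        intro t ht
        have k1 : HasDerivAt (fun y => ν/2*y) (ν/2) t := by simpa using (hasDerivAt_id t).const_mul (ν/2)
        exact (hφ t ht).sub k1
      apply monotoneOn_of_hasDerivWithinAt_nonneg (convex_Icc 0 T)
        (f' := fun t => (ν - c * ν * J t * sin (φ t) * cos (r t)) - ν/2)
      · intro y hy; exact (hdd y hy.1).continuousAt.continuousWithinAt
      · intro y hy; rw [interior_Icc] at hy; exact (hdd y hy.1.le).hasDerivWithinAt
      · intro y hy; rw [interior_Icc] at hy
        have := (hd y hy.1.le).1
        linarith
    have := mono (Set.left_mem_Icc.2 hT) (Set.right_mem_Icc.2 hT) hT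
    simp only [mul_zero] at this
    linarith
  · have hdd : ∀ t, 0 ≤ t → t ≤ T → HasDerivAt
        (fun t => tan (r t / 2) * exp (∫ z in (φ 0)..(φ t), ff n c E z))
        ((tan (r t / 2) * exp (∫ z in (φ 0)..(φ t), ff n c E z)) *
          (ff n c E (φ t) * (ν - c * ν * J t * sin (φ t) * cos (r t)) - c * ν * J t * cos (φ t))) t := by
      intro t ht htT
      have cp : 0 < cos (r t / 2) := cos_pos_of_mem_Ioo
        ⟨by linarith [hr0 t ht, pi_pos], by linarith [hrp t ht htT]⟩
      have k1 : HasDerivAt (fun y => r y / 2) (-(c * ν * J t * cos (φ t) * sin (r t)) / 2) t :=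
        (hr t ht).div_const 2
      have k2 := (hasDerivAt_tan cp.ne').comp t k1
      have k3 : HasDerivAt (fun x => ∫ z in (φ 0)..x, ff n c E z) (ff n c E (φ t)) (φ t) :=
        ((ff_cont n c E).integral_hasStrictDerivAt (φ 0) (φ t)).hasDerivAt
      have k4 := (k3.comp t (hφ t ht)).exp
      refine (k2.mul k4).congr_deriv ?_
      simp only [Function.comp]
      have s1 : sin (r t) = 2 * sin (r t / 2) * cos (r t / 2) := by
        rw [← sin_two_mul]; congr 1; ring
      rw [s1, tan_eq_sin_div_cos]
      field_simp
      ring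
    have anti : AntitoneOn (fun t => tan (r t / 2) * exp (∫ z in (φ 0)..(φ t), ff n c E z))
        (Set.Icc 0 T) := by
      apply antitoneOn_of_hasDerivWithinAt_nonpos (convex_Icc 0 T)
        (f' := fun t => ((tan (r t / 2) * exp (∫ z in (φ 0)..(φ t), ff n c E z)) *
          (ff n c E (φ t) * (ν - c * ν * J t * sin (φ t) * cos (r t)) - c * ν * J t * cos (φ t))))
      · intro y hy; exact (hdd y hy.1 hy.2).continuousAt.continuousWithinAt
      · intro y hy; rw [interior_Icc] at hy; exact (hdd y hy.1.le hy.2.le).hasDerivWithinAt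
      · intro y hy; rw [interior_Icc] at hy
        have h1 := (hd y hy.1.le)
        have h2 := ff_pt n c E ν (J y) (φ y) _ hc hE hν (hJ0 y hy.1.le) (hJI y hy.1.le hy.2.le) h1.1 h1.2
        have h3 : 0 ≤ tan (r y / 2) := tan_nonneg_of_nonneg_of_le_pi_div_two
          (by linarith [hr0 y hy.1.le]) (by linarith [hrp y hy.1.le hy.2.le])
        exact mul_nonpos_of_nonneg_of_nonpos (by positivity) (by linarith)
    have := anti (Set.left_mem_Icc.2 hT) (Set.right_mem_Icc.2 hT) hT
    simp only [intervalIntegral.integral_same, exp_zero, mul_one] at this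
    rw [exp_neg, ← div_eq_mul_inv, le_div_iff₀ (exp_pos _)]
    exact this

lemma core (n : ℕ) (c L α ν m : ℝ) (hc : 0 ≤ c) (hL : 0 ≤ L) (hα0 : 0 < α) (hαp : α < π)
    (hν : 0 < ν) (r φ J : ℝ → ℝ)
    (hr : ∀ t, 0 ≤ t → HasDerivAt r (-(c * ν * J t * cos (φ t) * sin (r t))) t)
    (hφ : ∀ t, 0 ≤ t → HasDerivAt φ (ν - c * ν * J t * sin (φ t) * cos (r t)) t)
    (hJ0 : ∀ t, 0 ≤ t → 0 ≤ J t) (hJ1 : ∀ t, 0 ≤ t → c * J t ≤ 1/2)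
    (hr0 : ∀ t, 0 ≤ t → 0 ≤ r t)
    (hJI : ∀ t, 0 ≤ t → |J t - influence n (φ t)| ≤ L * r t)
    (hm : 0 ≤ m)
    (hm' : m = c * ((2/3) * (2 * π * (n/(n+1))) - (8/3) * aW n - (16/3) * (L * α)))
    (hini : exp (4 * c * (aW n + L * α)) * r 0 < α) :
    ∀ t, 0 ≤ t → r t ≤ exp (4 * c * (aW n + L * α)) * r 0 ∧
      r t ≤ 2 * tan (r 0 / 2) * exp (4 * c * (aW n + L * α) + m) * exp (-(m * ν / (4 * π)) * t) := by
  have ha := aW_pos n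
  have hpi := pi_pos
  set b := 4 * c * (aW n + L * α) with hb
  have hb0 : 0 ≤ b := by positivity
  have hE : 0 ≤ L * α := by positivity
  have hs1 : 1 ≤ exp b := one_le_exp hb0
  have hr00 := hr0 0 le_rfl
  have hini0 : r 0 < α := by nlinarith
  have step : ∀ T, 0 ≤ T → (∀ t, 0 ≤ t → t ≤ T → r t ≤ α) → r T ≤ exp b * r 0 ∧
      r T ≤ 2 * tan (r 0 / 2) * exp (b + m) * exp (-(m * ν / (4 * π)) * T) := by
    intro T hT hle
    obtain ⟨s1, s2⟩ := seg n c (L * α) ν hc hE hν r φ J hr hφ hJ0 hJ1 hr0 T hT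
      (fun t h0 h1 => (hle t h0 h1).trans_lt hαp)
      (fun t h0 h1 => (hJI t h0).trans (by gcongr; exact hle t h0 h1))
    obtain ⟨b1, b2⟩ := ff_bound n c (L * α) m hc hE hm hm' (φ 0) (φ T) (by
      have : 0 ≤ ν / 2 * T := by positivity
      linarith)
    rw [← hb] at b1 b2
    have t0 : 0 ≤ tan (r 0 / 2) := tan_nonneg_of_nonneg_of_le_pi_div_two (by linarith) (by linarith)
    have hrT := hle T hT le_rfl
    have hrT0 := hr0 T hT
    constructor
    · have h1 : tan (r T / 2) ≤ exp b * tan (r 0 / 2) := by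
        calc _ ≤ _ := s2
          _ ≤ tan (r 0 / 2) * exp b := by gcongr; linarith
          _ = _ := mul_comm _ _
      have h2 := tan_scale (exp b) (r 0 / 2) hs1 (by linarith) (by linarith)
      by_contra hcon
      push Not at hcon
      have := tan_lt_tan_of_nonneg_of_lt_pi_div_two (x := exp b * (r 0 / 2)) (y := r T / 2)
        (by positivity) (by linarith) (by linarith)
      linarith
    · have h1 := le_tan (x := r T / 2) (by linarith) (by linarith)
      have h3 : -(∫ z in (φ 0)..(φ T), ff n c (L * α) z) ≤ (b + m) + -(m * ν / (4 * π)) * T := by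
        have : m * (ν / (4*π) * T) ≤ m * ((φ T - φ 0) / (2*π)) := by
          gcongr
          rw [le_div_iff₀ (by positivity)]
          calc _ = ν/2 * T := by field_simp; ring
            _ ≤ _ := s1
        have e : m * ν / (4 * π) * T = m * (ν / (4*π) * T) := by ring
        have e2 : -(m * ν / (4 * π)) * T = - (m * ν / (4 * π) * T) := by ring
        rw [e2, e]
        linarith
      have h4 : tan (r 0 / 2) * exp (-∫ z in (φ 0)..(φ T), ff n c (L * α) z) ≤
          tan (r 0 / 2) * (exp (b + m) * exp (-(m * ν / (4 * π)) * T)) := by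
        rw [← exp_add]
        gcongr
      calc r T ≤ 2 * (tan (r 0 / 2) * (exp (b + m) * exp (-(m * ν / (4 * π)) * T))) := by linarith
        _ = _ := by ring
  have all : ∀ t, 0 ≤ t → r t < α := by
    intro t1 ht1
    by_contra hcon
    push Not at hcon
    have hcont : ContinuousOn r (Set.Icc 0 t1) := fun y hy => (hr y hy.1).continuousAt.continuousWithinAt
    have hcomp : IsCompact (Set.Icc 0 t1 ∩ r ⁻¹' (Set.Ici α)) := by
      apply isCompact_Icc.of_isClosed_subset _ Set.inter_subset_left
      exact hcont.preimage_isClosed_of_isClosed isClosed_Icc isClosed_Ici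
    obtain ⟨T, ⟨⟨hT0, hT1⟩, hTα⟩, hleast⟩ := hcomp.exists_isLeast ⟨t1, ⟨ht1, le_rfl⟩, hcon⟩
    have hTα' : α ≤ r T := hTα
    have hlt : ∀ t, 0 ≤ t → t < T → r t < α := by
      intro t h0 h1
      by_contra h
      push Not at h
      have := hleast ⟨⟨h0, by linarith⟩, h⟩
      linarith
    obtain ⟨t2, ht2, ht2'⟩ := intermediate_value_Icc hT0 (hcont.mono (Set.Icc_subset_Icc_right hT1)) ⟨hini0.le, hTα'⟩
    have : T ≤ t2 := hleast ⟨⟨ht2.1, ht2.2.trans hT1⟩, ht2'.ge⟩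
    have hTt : T = t2 := le_antisymm this ht2.2
    have := (step T hT0 (by
      intro t h0 h1
      rcases h1.lt_or_eq with h | h
      · exact (hlt t h0 h).le
      · rw [h, hTt, ht2'])).1
    linarith
  intro t ht
  exact step t ht (fun s h0 _ => (all s h0).le)

lemma order_pres (d g : ℝ → ℝ) (K : ℝ) (hd : ∀ t, 0 ≤ t → HasDerivAt d (g t) t)
    (hg : ∀ t, 0 ≤ t → |g t| ≤ K * |d t|) (h0 : 0 ≤ d 0) :
    ∀ t, 0 ≤ t → 0 ≤ d t ∧ exp (-K * t) * d 0 ≤ d t := by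
  have hdd : ∀ (M t : ℝ), 0 ≤ t → HasDerivAt (fun t => d t ^ 2 * exp (M * t))
      (2 * exp (M * t) * (d t * g t + M / 2 * d t ^ 2)) t := by
    intro M t ht
    have k1 : HasDerivAt (fun y => M*y) M t := by simpa using (hasDerivAt_id t).const_mul M
    refine (((hd t ht).pow 2).mul k1.exp).congr_deriv ?_
    simp only [Pi.pow_apply]
    push_cast
    ring
  have hdg : ∀ t, 0 ≤ t → |d t * g t| ≤ K * d t ^ 2 := by
    intro t ht
    rw [abs_mul, ← sq_abs]
    have := mul_le_mul_of_nonneg_left (hg t ht) (abs_nonneg (d t))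
    nlinarith
  have anti : AntitoneOn (fun t => d t ^ 2 * exp ((-2 * K) * t)) (Set.Ici 0) := by
    apply antitoneOn_of_hasDerivWithinAt_nonpos (convex_Ici 0)
      (f' := fun t => (2 * exp ((-2*K) * t) * (d t * g t + (-2*K) / 2 * d t ^ 2)))
    · intro y hy; exact (hdd _ y hy).continuousAt.continuousWithinAt
    · intro y hy; rw [interior_Ici] at hy; exact (hdd _ y (le_of_lt hy)).hasDerivWithinAt
    · intro y hy; rw [interior_Ici] at hy
      have := (abs_le.1 (hdg y (le_of_lt hy))).2
      exact mul_nonpos_of_nonneg_of_nonpos (by positivity) (by linarith)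
  have mono : MonotoneOn (fun t => d t ^ 2 * exp ((2 * K) * t)) (Set.Ici 0) := by
    apply monotoneOn_of_hasDerivWithinAt_nonneg (convex_Ici 0)
      (f' := fun t => (2 * exp ((2*K) * t) * (d t * g t + (2*K) / 2 * d t ^ 2)))
    · intro y hy; exact (hdd _ y hy).continuousAt.continuousWithinAt
    · intro y hy; rw [interior_Ici] at hy; exact (hdd _ y (le_of_lt hy)).hasDerivWithinAt
    · intro y hy; rw [interior_Ici] at hy
      have := (abs_le.1 (hdg y (le_of_lt hy))).1
      exact mul_nonneg (by positivity) (by linarith)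
  intro t ht
  have hpos : 0 ≤ d t := by
    by_contra hneg
    push Not at hneg
    have hcont : ContinuousOn d (Set.Icc 0 t) := fun y hy => (hd y hy.1).continuousAt.continuousWithinAt
    obtain ⟨s, hs, hs0⟩ := intermediate_value_Icc' ht hcont ⟨hneg.le, h0⟩
    have := anti (Set.mem_Ici.2 hs.1) (Set.mem_Ici.2 ht) hs.2
    simp only [hs0] at this
    have h1 : 0 < d t ^ 2 * exp (-2 * K * t) := by
      have : d t ≠ 0 := hneg.ne
      positivity
    have h2 : (0:ℝ)^2 * exp (-2 * K * s) = 0 := by simp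
    linarith
  refine ⟨hpos, ?_⟩
  have := mono (Set.mem_Ici.2 le_rfl) (Set.mem_Ici.2 ht) ht
  simp only [mul_zero, exp_zero, mul_one] at this
  have e : d t ^ 2 * exp (2 * K * t) = (d t * exp (K * t))^2 := by
    rw [mul_pow, ← exp_nat_mul]; congr 2; push_cast; ring
  rw [e] at this
  have h2 := (sq_le_sq₀ h0 (by positivity)).1 this
  rw [show -K * t = -(K*t) by ring, exp_neg, inv_mul_le_iff₀ (exp_pos _)]
  linarith

lemma interp (ρ : ℝ → ℝ) (P C lam α : ℝ) (hP : 0 < P) (hC : 0 < C) (hl : 0 < lam) (hPα : P < α)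
    (h1 : ∀ t, 0 ≤ t → ρ t ≤ P) (h2 : ∀ t, 0 ≤ t → ρ t ≤ C * exp (-lam * t)) :
    ∃ A Λ, 0 < A ∧ A < α ∧ 0 < Λ ∧ ∀ t, 0 ≤ t → ρ t ≤ A * exp (-Λ * t) := by
  obtain ⟨A, hPA, hAα⟩ := exists_between hPα
  have hA : 0 < A := hP.trans hPA
  set p := log P with hp
  set q := log C with hq
  set p' := log A with hp'
  have hpp : p < p' := log_lt_log hP hPA
  set s := (p' - p) / (|q - p| + (p' - p)) with hs
  have hden : 0 < |q - p| + (p' - p) := by have := abs_nonneg (q-p); linarith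
  have hs0 : 0 < s := by apply div_pos _ hden; linarith
  have hs1 : s ≤ 1 := by rw [hs, div_le_one hden]; have := abs_nonneg (q-p); linarith
  have hsq : s * (q - p) ≤ p' - p := by
    rw [hs, div_mul_eq_mul_div, div_le_iff₀ hden]
    have := le_abs_self (q-p)
    nlinarith
  refine ⟨A, s * lam, hA, hAα, by positivity, fun t ht => ?_⟩
  have e1 := h1 t ht
  have e2 := h2 t ht
  rw [← exp_log hP] at e1
  rw [← exp_log hC, ← exp_add] at e2
  rw [← exp_log hA, ← exp_add]
  rw [← hp] at e1
  rw [← hq] at e2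
  rw [← hp']
  rcases le_total p (q + -lam * t) with h | h
  · refine e1.trans (exp_le_exp.2 ?_)
    nlinarith
  · refine e2.trans (exp_le_exp.2 ?_)
    nlinarith

set_option maxHeartbeats 1000000

/-- Exponential decay of the phase diameter for an identical ensemble:
with `R(t) = (max_i θ_i(t) − min_i θ_i(t))/2`, small coupling and small,
well-prepared initial data, `R` decays exponentially and stays below `α`. -/
theorem stmt19 (n N : ℕ) (hn : 2 ≤ n) [NeZero N] (ν : ℝ) (hν : 0 < ν) (κ α : ℝ)
    (θ : Fin N → ℝ → ℝ) (hθ : IsWinfreeSol n N (fun _ => ν) κ θ)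
    (R : ℝ → ℝ)
    (hR : ∀ t : ℝ, R t = ((⨆ i : Fin N, θ i t) - (⨅ i : Fin N, θ i t)) / 2)
    (hκ0 : 0 < κ) (hκ : κ < ν / (2 ^ (n + 1) * aW n))
    (hα0 : 0 < α)
    (hα : α < (Real.pi / (2 ^ (n + 1) * aW n) * ((n : ℝ) / ((n : ℝ) + 1))
                - 1 / 2 ^ n)
              * (1 / Real.sqrt (2 * (n : ℝ) - 1))
              * (2 * (n : ℝ) / (2 * (n : ℝ) - 1)) ^ (n - 1))
    (hR0 : R 0 < α * Real.exp
        (-(α * Real.sqrt (2 * (n : ℝ) - 1) *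
            ((2 * (n : ℝ) - 1) / (2 * (n : ℝ))) ^ (n - 1)) - 1 / 2 ^ (n - 1))) :
    ∃ β₁ β₂ Λ₁ Λ₂ : ℝ, 0 < β₁ ∧ 0 < β₂ ∧ 0 < Λ₁ ∧ 0 < Λ₂ ∧
      ∀ t : ℝ, 0 ≤ t →
        β₁ * Real.exp (-Λ₁ * t) * R 0 ≤ R t ∧
        R t ≤ β₂ * Real.exp (-Λ₂ * t) * R 0 ∧
        β₂ * Real.exp (-Λ₂ * t) * R 0 < α := by
  have ha := aW_pos n
  have ha1 := two_pow_mul_aW n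
  have hpi := pi_pos
  have hNne : N ≠ 0 := NeZero.ne N
  have hN : (0:ℝ) < N := by positivity
  have hn' : (2:ℝ) ≤ n := by exact_mod_cast hn
  have h2n : (0:ℝ) < 2 * (n:ℝ) - 1 := by linarith
  set q : ℝ := √(2*(n:ℝ)-1) * ((2*(n:ℝ)-1)/(2*n))^(n-1) with hq
  have hq0 : 0 < q := by
    have := sqrt_pos.2 h2n
    positivity
  have hqh : 3/4 ≤ q := by
    have b1 : (3/2:ℝ) ≤ √(2*(n:ℝ)-1) := by
      apply le_sqrt_of_sq_le; norm_num; linarith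
    have b2 : (1/2:ℝ) ≤ ((2*(n:ℝ)-1)/(2*n))^(n-1) := by
      have := one_add_mul_le_pow (a := -1/(2*(n:ℝ))) (by
        rw [le_div_iff₀ (by positivity)]; linarith) (n-1)
      have e : 1 + -1/(2*(n:ℝ)) = (2*(n:ℝ)-1)/(2*n) := by field_simp; ring
      rw [e] at this
      refine le_trans ?_ this
      rw [Nat.cast_sub (by omega)]
      push_cast
      have e2 : 1 + ((n:ℝ)-1) * (-1/(2*n)) = 1/2 + 1/(2*n) := by field_simp; ring
      rw [e2]
      have : (0:ℝ) < 1/(2*n) := by positivity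
      linarith
    calc (3/4:ℝ) = 3/2 * (1/2) := by norm_num
      _ ≤ q := by rw [hq]; gcongr
  have h2pow : (2:ℝ)^(n+1) = 4 * 2^(n-1) := by
    obtain ⟨k, rfl⟩ : ∃ k, n = k+1 := ⟨n-1, by omega⟩
    simp only [Nat.add_sub_cancel]; ring
  have h2pow' : (2:ℝ)^n = 2 * 2^(n-1) := by
    obtain ⟨k, rfl⟩ : ∃ k, n = k+1 := ⟨n-1, by omega⟩
    simp only [Nat.add_sub_cancel]; ring
  set P : ℝ := 2^(n-1) with hP
  have hP0 : 0 < P := by positivity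
  -- the bound on α
  have hαq : α * q < π / (4 * P * aW n) * ((n : ℝ) / ((n : ℝ) + 1)) - 1 / (2 * P) := by
    have e : (1 / √(2 * (n : ℝ) - 1)) * (2 * (n : ℝ) / (2 * (n : ℝ) - 1)) ^ (n - 1) = 1 / q := by
      rw [hq, ← inv_div (2*(n:ℝ)) , inv_pow]
      have := sqrt_pos.2 h2n
      field_simp
    rw [mul_assoc, e, h2pow, h2pow', mul_one_div, lt_div_iff₀ hq0] at hα
    exact hα
  have hnn : (n : ℝ) / ((n : ℝ) + 1) ≤ 1 := by
    rw [div_le_one (by positivity)]; linarith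
  set L : ℝ := aW n * (P * q) with hL
  have hL0 : 0 < L := by positivity
  have hLα : L * α < π / 4 * ((n : ℝ) / ((n : ℝ) + 1)) - aW n / 2 := by
    have := mul_lt_mul_of_pos_left hαq (show 0 < aW n * P by positivity)
    calc L * α = aW n * P * (α * q) := by rw [hL]; ring
      _ < _ := this
      _ = _ := by field_simp
  have hαp : α < π := by
    have h1 : π / (4 * P * aW n) ≤ π / 2 := by
      apply div_le_div_of_nonneg_left hpi.le (by norm_num)
      rw [h2pow'] at ha1; nlinarith
    have h2 : π / (4 * P * aW n) * ((n : ℝ) / ((n : ℝ) + 1)) ≤ π/2 * 1 := by gcongr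
    have h3 : 0 < 1 / (2 * P) := by positivity
    nlinarith
  set c : ℝ := κ / ν with hc
  have hc0 : 0 < c := by positivity
  have hcν : c * ν = κ := by rw [hc]; field_simp
  have hcP : c * (4 * P * aW n) < 1 := by
    rw [h2pow, lt_div_iff₀ (by positivity)] at hκ
    rw [hc, div_mul_eq_mul_div, div_lt_one hν]; exact hκ
  -- order
  set J : ℝ → ℝ := fun t => (∑ j : Fin N, influence n (θ j t)) / N with hJ
  have hJ0 : ∀ t, 0 ≤ J t := fun t =>
    div_nonneg (Finset.sum_nonneg fun j _ => infl_nonneg n _) hN.le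
  have hJ2 : ∀ t, J t ≤ 2^n * aW n := by
    intro t
    simp only [hJ]
    rw [div_le_iff₀ hN]
    calc _ ≤ ∑ j : Fin N, 2^n * aW n := Finset.sum_le_sum fun j _ => infl_le n _
      _ = _ := by simp; ring
  have hθ' : ∀ i t, 0 ≤ t → HasDerivAt (θ i) (ν - κ * J t * sin (θ i t)) t := by
    intro i t ht
    refine (hθ i t ht).congr_deriv ?_
    simp only [hJ, sens]; ring
  set K : ℝ := κ * (2^n * aW n) with hK
  have hK0 : 0 < K := by positivity
  have hJK : ∀ t, κ * J t ≤ K := fun t => by rw [hK]; gcongr; exact hJ2 t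
  have hord : ∀ i j, θ j 0 ≤ θ i 0 → ∀ t, 0 ≤ t → 0 ≤ θ i t - θ j t ∧
      exp (-K * t) * (θ i 0 - θ j 0) ≤ θ i t - θ j t := by
    intro i j hij
    apply order_pres (fun t => θ i t - θ j t)
      (fun t => (ν - κ * J t * sin (θ i t)) - (ν - κ * J t * sin (θ j t))) K
    · intro t ht; exact (hθ' i t ht).sub (hθ' j t ht)
    · intro t ht
      have e : (ν - κ * J t * sin (θ i t)) - (ν - κ * J t * sin (θ j t)) =
        -((κ * J t) * (sin (θ i t) - sin (θ j t))) := by ring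
      rw [e, abs_neg, abs_mul, abs_of_nonneg (mul_nonneg hκ0.le (hJ0 t))]
      apply mul_le_mul (hJK t) _ (abs_nonneg _) hK0.le
      exact abs_sin_sub_sin_le _ _
    · simpa using hij
  have : Nonempty (Fin N) := ⟨⟨0, by omega⟩⟩
  obtain ⟨i, hi⟩ := Finite.exists_max (fun i => θ i 0)
  obtain ⟨j, hj⟩ := Finite.exists_min (fun i => θ i 0)
  have hi' : ∀ k t, 0 ≤ t → θ k t ≤ θ i t := fun k t ht => by
    have := (hord i k (hi k) t ht).1; linarith
  have hj' : ∀ k t, 0 ≤ t → θ j t ≤ θ k t := fun k t ht => by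
    have := (hord k j (hj k) t ht).1; linarith
  have hRt : ∀ t, 0 ≤ t → R t = (θ i t - θ j t) / 2 := by
    intro t ht
    have e1 : (⨆ k : Fin N, θ k t) = θ i t :=
      le_antisymm (ciSup_le fun k => hi' k t ht) (le_ciSup (f := fun k => θ k t) (Set.finite_range _).bddAbove i)
    have e2 : (⨅ k : Fin N, θ k t) = θ j t :=
      le_antisymm (ciInf_le (f := fun k => θ k t) (Set.finite_range _).bddBelow j) (le_ciInf fun k => hj' k t ht)
    rw [hR, e1, e2]
  set r : ℝ → ℝ := fun t => (θ i t - θ j t) / 2 with hr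
  set φ : ℝ → ℝ := fun t => (θ i t + θ j t) / 2 with hφ
  have ei : ∀ t, θ i t = φ t + r t := fun t => by simp only [hr, hφ]; ring
  have ej : ∀ t, θ j t = φ t - r t := fun t => by simp only [hr, hφ]; ring
  have hr0 : ∀ t, 0 ≤ t → 0 ≤ r t := fun t ht => by
    have := (hord i j (hi j) t ht).1
    simp only [hr]; linarith
  set m : ℝ := c * ((2/3) * (2 * π * (n/(n+1))) - (8/3) * aW n - (16/3) * (L * α)) with hm
  have hm0 : 0 < m := by
    apply mul_pos hc0
    linarith
  set b : ℝ := 4 * c * (aW n + L * α) with hb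
  have hini : exp b * r 0 < α := by
    rw [hRt 0 le_rfl] at hR0
    have hbB : b ≤ α * q + 1 / P := by
      have k1 : 4 * c * aW n ≤ 1 / P := by rw [le_div_iff₀ hP0]; nlinarith
      have k2 : 4 * c * (L * α) ≤ α * q := by
        calc 4 * c * (L * α) = (c * (4 * P * aW n)) * (α * q) := by rw [hL]; ring
          _ ≤ 1 * (α * q) := by gcongr
          _ = _ := one_mul _
      rw [hb]; linarith
    have e : -(α * √(2 * (n : ℝ) - 1) * ((2 * (n : ℝ) - 1) / (2 * (n : ℝ))) ^ (n - 1)) - 1 / P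
        = -(α * q + 1 / P) := by rw [hq]; ring
    rw [e] at hR0
    calc exp b * r 0 < exp b * (α * exp (-(α * q + 1/P))) := by
          exact mul_lt_mul_of_pos_left hR0 (exp_pos _)
      _ = α * exp (b - (α * q + 1/P)) := by rw [sub_eq_add_neg, exp_add]; ring
      _ ≤ α * exp 0 := by gcongr; linarith
      _ = α := by simp
  have hcore := core n c L α ν m hc0.le hL0.le hα0 hαp hν r φ J (by
      intro t ht
      refine (((hθ' i t ht).sub (hθ' j t ht)).div_const 2).congr_deriv ?_
      rw [ei, ej, sin_add, sin_sub, hcν]; ring) (by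
      intro t ht
      refine (((hθ' i t ht).add (hθ' j t ht)).div_const 2).congr_deriv ?_
      rw [ei, ej, sin_add, sin_sub, hcν]; ring) (fun t _ => hJ0 t) (by
      intro t _
      have := mul_le_mul_of_nonneg_left (hJ2 t) hc0.le
      rw [h2pow'] at this
      linarith) hr0 (by
      intro t ht
      have e : J t - influence n (φ t) = (∑ k : Fin N, (influence n (θ k t) - influence n (φ t))) / N := by
        rw [Finset.sum_sub_distrib]
        simp [hJ]
        field_simp
      rw [e, abs_div, abs_of_pos hN, div_le_iff₀ hN]
      calc _ ≤ ∑ k : Fin N, |influence n (θ k t) - influence n (φ t)| := Finset.abs_sum_le_sum_abs _ _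
        _ ≤ ∑ k : Fin N, L * r t := by
          apply Finset.sum_le_sum
          intro k _
          refine (infl_lip n (by omega) _ _).trans ?_
          apply mul_le_mul_of_nonneg_left _ hL0.le
          have := hi' k t ht
          have := hj' k t ht
          rw [abs_le]
          simp only [hr, hφ]
          constructor <;> linarith
        _ = _ := by simp; ring) hm0.le hm hini
  have hlow : ∀ t, 0 ≤ t → 1 * exp (-K * t) * R 0 ≤ R t := by
    intro t ht
    rw [hRt 0 le_rfl, hRt t ht]
    have := (hord i j (hi j) t ht).2
    linarith
  have hR00 : R 0 = r 0 := hRt 0 le_rfl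
  rcases (hr0 0 le_rfl).eq_or_lt with hz | hpos
  · refine ⟨1, 1, K, 1, one_pos, one_pos, hK0, one_pos, fun t ht => ⟨hlow t ht, ?_, ?_⟩⟩
    · have := (hcore t ht).1
      rw [← hz] at this
      rw [hR00, ← hz, hRt t ht]
      change r t ≤ _
      linarith
    · rw [hR00, ← hz]; linarith
  · have htan : 0 < tan (r 0 / 2) := by
      apply tan_pos_of_pos_of_lt_pi_div_two (by linarith)
      have h1 : 1 ≤ exp b := one_le_exp (by positivity)
      have h2 : 1 * r 0 ≤ exp b * r 0 := mul_le_mul_of_nonneg_right h1 hpos.le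
      linarith
    obtain ⟨A, Λ, hA, hAα, hΛ, hAt⟩ := interp r (exp b * r 0) (2 * tan (r 0 / 2) * exp (b + m))
      (m * ν / (4 * π)) α (by positivity) (by positivity) (by positivity) hini
      (fun t ht => (hcore t ht).1) (fun t ht => (hcore t ht).2)
    refine ⟨1, A / r 0, K, Λ, one_pos, by positivity, hK0, hΛ, fun t ht => ⟨hlow t ht, ?_, ?_⟩⟩
    · rw [hR00, hRt t ht]
      calc _ ≤ A * exp (-Λ * t) := hAt t ht
        _ = _ := by field_simp
    · rw [hR00]
      calc _ = A * exp (-Λ * t) := by field_simp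
        _ ≤ A * 1 := by
          gcongr
          apply exp_le_one_iff.2
          nlinarith
        _ < α := by linarith
end
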